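/- For every integer N ≥ 2, the modular polynomial Φ_N ∈ ℤ[X,Y] satisfies deg_X(Φ_N) = deg_Y(Φ_N) = ψ(N), where ψ(N) = N ∏_{p | N, p prime} (1 + 1/p) is the Dedekind psi function, and its logarithmic height h(Φ_N) (the logarithm of the maximum absolute value of its coefficients) satisfies the explicit bounds 6 ψ(N) ( log N − 2 λ_N − 0.0351 ) ≤ h(Φ_N) ≤ 6 ψ(N) ( log N − 2 λ_N + 9.5387 ), where λ_N = Σ_{p^n ∥ N} ((p^n − 1)/(p^{n−1}(p² − 1))) log p, the sum running over the exact prime powers p^n dividing N. -/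

import Mathlib

/-!
Degree and height of the modular polynomial `Φ_N ∈ ℤ[X,Y]`:
`deg_X Φ_N = deg_Y Φ_N = ψ(N)` (Dedekind psi), and the explicit bounds
`6 ψ(N)(log N - 2 λ_N - 0.0351) ≤ h(Φ_N) ≤ 6 ψ(N)(log N - 2 λ_N + 9.5387)`.

The modular polynomial is characterized as the irreducible polynomial, monic in
each variable, vanishing at `(j₁, j₂)` exactly when `j₁, j₂` are `j`-invariants
of elliptic curves related by a cyclic `N`-isogeny; analytically, `j₁ = j(γτ)`,
`j₂ = j(τ)` for some `τ ∈ ℍ` and some primitive integer matrix `γ` of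
determinant `N`.
-/

/-- The modular discriminant in the nome. -/
noncomputable def Δ (q : ℂ) : ℂ := q * ∏' n : ℕ, (1 - q ^ (n + 1)) ^ 24

/-- The normalized Eisenstein series of weight 4 in the nome. -/
noncomputable def E₄ (q : ℂ) : ℂ :=
  1 + 240 * ∑' n : ℕ, (ArithmeticFunction.sigma 3 (n + 1) : ℂ) * q ^ (n + 1)

/-- The modular `j`-invariant in the nome. -/
noncomputable def J (q : ℂ) : ℂ := E₄ q ^ 3 / Δ q

/-- The classical modular `j`-invariant, `j(τ) = J(e^{2πiτ})`. -/
noncomputable def jInv (τ : ℂ) : ℂ := J (Complex.exp (2 * Real.pi * Complex.I * τ))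

/-- Evaluation of a bivariate integer polynomial (variable `0` is `X`, variable `1` is `Y`). -/
noncomputable def evalBiv (P : MvPolynomial (Fin 2) ℤ) (x y : ℂ) : ℂ :=
  MvPolynomial.eval₂ (Int.castRingHom ℂ) ![x, y] P

/-- `P` is the modular polynomial `Φ_N`: irreducible, monic in each of the two
variables, and `P(x, y) = 0` iff `x = j(γτ)`, `y = j(τ)` for some `τ ∈ ℍ` and some
primitive integral matrix `γ = (a b; c d)` of determinant `N` (equivalently, `x, y`
are `j`-invariants of elliptic curves related by a cyclic `N`-isogeny). -/
def IsModularPolynomial (N : ℕ) (P : MvPolynomial (Fin 2) ℤ) : Prop :=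
  Irreducible P ∧
  (MvPolynomial.finSuccEquiv ℤ 1 P).Monic ∧
  (MvPolynomial.finSuccEquiv ℤ 1 (MvPolynomial.rename (⇑(Equiv.swap 0 1)) P)).Monic ∧
  ∀ x y : ℂ, evalBiv P x y = 0 ↔
    ∃ τ : ℂ, 0 < τ.im ∧ ∃ a b c d : ℤ,
      a * d - b * c = (N : ℤ) ∧
      Int.gcd (Int.gcd a b) (Int.gcd c d) = 1 ∧
      x = jInv (((a : ℂ) * τ + b) / ((c : ℂ) * τ + d)) ∧ y = jInv τ

/-- The logarithmic height of an integer polynomial: `log max |coeff|`. -/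
noncomputable def polyHeight (P : MvPolynomial (Fin 2) ℤ) : ℝ :=
  Real.log ((P.support.sup fun m => (MvPolynomial.coeff m P).natAbs : ℕ) : ℝ)

/-- The Dedekind psi function `ψ(N) = N ∏_{p ∣ N} (1 + 1/p)`. -/
def dedekindPsi (N : ℕ) : ℕ :=
  (N * ∏ p ∈ N.primeFactors, (p + 1)) / ∏ p ∈ N.primeFactors, p

/-- `λ_N = Σ_{pⁿ ∥ N} ((pⁿ - 1)/(p^{n-1}(p² - 1))) log p`. -/
noncomputable def lambdaN (N : ℕ) : ℝ :=
  ∑ p ∈ N.primeFactors,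
    (((p : ℝ) ^ (N.factorization p) - 1) /
        ((p : ℝ) ^ (N.factorization p - 1) * ((p : ℝ) ^ 2 - 1))) * Real.log p

/-!
For `N ≥ 1` the primitive integral matrices of determinant `N` fall into `ψ(N)` classes under left
multiplication by `SL₂(ℤ)`, represented by the matrices `γ = (a b; 0 d)` in Hermite normal form, and
`Φ_N(X, j(τ)) = ∏ (X - j(γτ))`. The product `∏ Δ(γτ)` is `Δ(τ)^ψ(N)` up to a constant of absolute
value `1`, and `Im γτ = (a / d) Im τ`; hence the logarithms of the Petersson norms `|Δ| Im⁶` at the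
points `γτ` sum to the logarithm at `τ`, times `ψ(N)`, minus exactly `6 ψ(N) (log N - 2 λ_N)`. Since
`log max (1, |j|) = log max (|E₄|³, |Δ|) - log |Δ|`, what is left to control in the Mahler measure
of `Φ_N(X, j(τ))` is the Petersson norm of `max (|E₄|³, |Δ|)`.

For the lower bound, specialise at `j(ρ) = 0`: Landau's inequality bounds the Mahler measure of
`Φ_N(X, 0)` by its coefficients, and the Petersson norm of `max (|E₄|³, |Δ|)` is bounded below on
the fundamental domain.

For the upper bound, specialise at `|j(τ)| = 1` and move each `γτ` to the fundamental domain, where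
that Petersson norm is controlled by the imaginary part. After a permutation of the classes the
reduced matrices have bottom rows `d v`, with `d` the lower right entry of `γ` and the pairs
`(γ, v)` distinct, so that the imaginary parts are bounded on average. The Mahler measure bounds the
coefficients of `Φ_N(X, y)` for `|y| = 1`, and Parseval on that circle bounds those of `Φ_N`.
-/

/-! ### The modular invariant -/

namespace ModularPolynomial

open UpperHalfPlane MatrixGroups Polynomial Filter
open scoped Real ModularForm Topology

/-- The modular invariant `j = E₄³ / Δ` on the upper half-plane, in terms of Mathlib's modular
forms. -/
noncomputable def kleinJ (τ : ℍ) : ℂ := ModularForm.E₄ τ ^ 3 / ModularForm.discriminant τ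

/-- The nome `q = e^{2πiτ}`. -/
noncomputable def nome (τ : ℍ) : ℂ := Complex.exp (2 * π * Complex.I * τ)

lemma Δ_nome (τ : ℍ) : Δ (nome τ) = ModularForm.discriminant τ := by
  have hq : Function.Periodic.qParam 1 (τ : ℂ) = nome τ := by
    simp [nome, Function.Periodic.qParam]
  have heta (n : ℕ) : ModularForm.eta_q n (τ : ℂ) = nome τ ^ (n + 1) :=
    ModularForm.eta_q_eq_pow n τ
  simp only [ModularForm.discriminant_eq_q_prod, Δ, hq, heta]

lemma E₄_nome (τ : ℍ) : E₄ (nome τ) = ModularForm.E₄ τ := by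
  have hbernoulli : (_root_.bernoulli 4 : ℚ) = -1 / 30 := by
    rw [bernoulli_eq_bernoulli'_of_ne_one (by norm_num), bernoulli'_four]
  rw [ModularForm.E₄, EisensteinSeries.q_expansion_bernoulli (by norm_num) (by decide), E₄]
  simp_rw [zpow_natCast]
  rw [tsum_pnat_eq_tsum_succ (f := fun n ↦ ((ArithmeticFunction.sigma 3 n : ℕ) : ℂ) *
    Complex.exp (2 * π * Complex.I * τ) ^ n), hbernoulli]
  simp only [nome]
  push_cast
  ring

lemma jInv_coe (τ : ℍ) : jInv τ = kleinJ τ := by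
  rw [jInv, _root_.J, kleinJ, ← Δ_nome, ← E₄_nome, nome]

lemma E₄_smul (σ : SL(2, ℤ)) (τ : ℍ) :
    ModularForm.E₄ (σ • τ) = denom σ τ ^ 4 * ModularForm.E₄ τ :=
  mod_cast SlashInvariantForm.slash_action_eqn'' (Γ := 𝒮ℒ) ModularForm.E₄ ⟨σ, rfl⟩ τ

lemma discriminant_smul (σ : SL(2, ℤ)) (τ : ℍ) :
    ModularForm.discriminant (σ • τ) = denom σ τ ^ 12 * ModularForm.discriminant τ :=
  mod_cast SlashInvariantForm.slash_action_eqn'' (Γ := 𝒮ℒ) CuspForm.discriminant ⟨σ, rfl⟩ τ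

lemma kleinJ_smul (σ : SL(2, ℤ)) (τ : ℍ) : kleinJ (σ • τ) = kleinJ τ := by
  rw [kleinJ, kleinJ, E₄_smul, discriminant_smul, mul_pow, ← pow_mul,
    mul_div_mul_left _ _ (pow_ne_zero _ (denom_ne_zero σ τ))]

lemma exists_eq_E₄_pow_add_discriminant_mul (n : ℕ)
    (G : ModularForm 𝒮ℒ (12 * ((n + 1 : ℕ) : ℤ))) :
    ∃ (c : ℂ) (F : ModularForm 𝒮ℒ (12 * (n : ℤ))), ∀ τ : ℍ,
      G τ = c * (ModularForm.E₄ τ ^ 3) ^ (n + 1) + ModularForm.discriminant τ * F τ := by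
  let E : ModularForm 𝒮ℒ (12 * ((n + 1 : ℕ) : ℤ)) :=
    ModularForm.mcast (by push_cast; ring) (ModularForm.E₄.pow (3 * (n + 1)))
  have hE : (qExpansion 1 E).coeff 0 = 1 := by
    have hE₄ : (qExpansion 1 ModularForm.E₄).coeff 0 = 1 :=
      EisensteinSeries.E_qExpansion_coeff_zero (by norm_num) (by decide)
    simp only [E, ModularForm.coe_mcast]
    rw [ModularForm.qExpansion_pow one_pos one_mem_strictPeriods_SL]
    simp only [PowerSeries.coeff_zero_eq_constantCoeff, map_pow] at hE₄ ⊢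
    rw [hE₄, one_pow]
  set c := (qExpansion 1 G).coeff 0
  have hcusp := (ModularForm.isCuspForm_iff_coeffZero_eq_zero _).mp
    (ModularForm.sub_smul_isCuspForm G E hE)
  let F := CuspForm.discriminantEquiv (ModularForm.toCuspForm _ hcusp)
  refine ⟨c, ModularForm.mcast (by push_cast; ring) F, fun τ ↦ ?_⟩
  have hpow : (ModularForm.E₄.pow (3 * (n + 1))) τ = ModularForm.E₄ τ ^ (3 * (n + 1)) := by
    rw [ModularForm.coe_pow]; rfl
  have hF : F τ = (G τ - c * ModularForm.E₄ τ ^ (3 * (n + 1))) / ModularForm.discriminant τ := by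
    simp [F, E, c, hpow, CuspForm.discriminantEquiv_apply, ModularForm.toCuspForm_apply]
  rw [ModularForm.coe_mcast, hF, mul_div_cancel₀ _ (ModularForm.discriminant_ne_zero τ), pow_mul]
  ring

lemma exists_eval_kleinJ (n : ℕ) (G : ModularForm 𝒮ℒ (12 * (n : ℤ))) :
    ∃ p : ℂ[X], ∀ τ : ℍ, G τ / ModularForm.discriminant τ ^ n = p.eval (kleinJ τ) := by
  induction n with
  | zero =>
    obtain ⟨c, hc⟩ := ModularFormClass.levelOne_weight_zero_const
      (ModularForm.mcast (by simp) G : ModularForm 𝒮ℒ 0)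
    exact ⟨C c, fun τ ↦ by simpa using congrFun hc τ⟩
  | succ n ih =>
    obtain ⟨c, F, hF⟩ := exists_eq_E₄_pow_add_discriminant_mul n G
    obtain ⟨p, hp⟩ := ih F
    refine ⟨C c * X ^ (n + 1) + p, fun τ ↦ ?_⟩
    have hΔ := ModularForm.discriminant_ne_zero τ
    rw [hF, add_div, pow_succ' (ModularForm.discriminant τ), mul_div_mul_left _ _ hΔ, hp]
    simp only [eval_add, eval_mul, eval_C, eval_pow, eval_X, kleinJ, div_pow,
      mul_div_assoc, pow_succ' (ModularForm.discriminant τ)]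

end ModularPolynomial

/-! ### Primitive matrices of determinant `N` -/

namespace ModularPolynomial

open UpperHalfPlane MatrixGroups Filter Matrix Matrix.SpecialLinearGroup

/-- An integral matrix is primitive if its entries have no common divisor. -/
def IsPrimitive (M : Matrix (Fin 2) (Fin 2) ℤ) : Prop :=
  ∀ k : ℤ, (∀ i j, k ∣ M i j) → IsUnit k

lemma IsPrimitive.of_mul_left {A M : Matrix (Fin 2) (Fin 2) ℤ} (h : IsPrimitive (A * M)) :
    IsPrimitive M := fun k hk ↦
  h k fun _ j ↦ mul_apply (M := A) (N := M) ▸ Finset.dvd_sum fun l _ ↦ (hk l j).mul_left _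

lemma IsPrimitive.of_mul_right {M A : Matrix (Fin 2) (Fin 2) ℤ} (h : IsPrimitive (M * A)) :
    IsPrimitive M := fun k hk ↦
  h k fun i _ ↦ mul_apply (M := M) (N := A) ▸ Finset.dvd_sum fun l _ ↦ (hk i l).mul_right _

lemma isPrimitive_iff {a b c d : ℤ} :
    IsPrimitive !![a, b; c, d] ↔ Int.gcd (Int.gcd a b) (Int.gcd c d) = 1 := by
  have hdvd (k : ℤ) : (∀ i j, k ∣ !![a, b; c, d] i j) ↔
      k ∣ Int.gcd (Int.gcd a b) (Int.gcd c d) := by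
    simp [Fin.forall_fin_two, Int.coe_gcd, dvd_gcd_iff, and_assoc]
  simp only [IsPrimitive, hdvd]
  constructor
  · intro h
    simpa using Int.isUnit_iff_natAbs_eq.mp (h _ dvd_rfl)
  · intro h k hk
    rw [h] at hk
    exact isUnit_of_dvd_one (mod_cast hk)

/-- The pairs `(d, b)` encoding the primitive matrices `(a b; 0 d)` of determinant `N` in Hermite
normal form, that is, with `a d = N` and `0 ≤ b < d`. -/
def hermiteReps (N : ℕ) : Finset (Σ _ : ℕ, ℕ) :=
  N.divisors.sigma fun d ↦ (Finset.range d).filter fun b ↦ (d.gcd (N / d)).Coprime b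

/-- The type of primitive matrices of determinant `N` in Hermite normal form. They represent the
left `SL(2, ℤ)`-orbits of primitive matrices of determinant `N`. -/
abbrev HermiteRep (N : ℕ) : Type := hermiteReps N

variable {N : ℕ}

namespace HermiteRep

/-- The lower right entry of `(a b; 0 d)`. -/
def d (p : HermiteRep N) : ℕ := p.1.1

/-- The upper right entry of `(a b; 0 d)`. -/
def b (p : HermiteRep N) : ℕ := p.1.2

/-- The upper left entry of `(a b; 0 d)`. -/
def a (p : HermiteRep N) : ℕ := N / p.d

lemma d_mem_divisors (p : HermiteRep N) : p.d ∈ N.divisors := (Finset.mem_sigma.mp p.2).1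

lemma a_mul_d (p : HermiteRep N) : p.a * p.d = N :=
  Nat.div_mul_cancel (Nat.dvd_of_mem_divisors p.d_mem_divisors)

lemma d_pos (p : HermiteRep N) : 0 < p.d := Nat.pos_of_mem_divisors p.d_mem_divisors

lemma a_pos (p : HermiteRep N) : 0 < p.a := Nat.div_pos (Nat.divisor_le p.d_mem_divisors) p.d_pos

lemma b_lt_d (p : HermiteRep N) : p.b < p.d := by
  exact Finset.mem_range.mp (Finset.mem_filter.mp (Finset.mem_sigma.mp p.2).2).1

lemma coprime (p : HermiteRep N) : (p.d.gcd p.a).Coprime p.b :=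
  (Finset.mem_filter.mp (Finset.mem_sigma.mp p.2).2).2

lemma ext {p q : HermiteRep N} (hd : p.d = q.d) (hb : p.b = q.b) : p = q :=
  Subtype.ext (Sigma.ext hd (heq_of_eq hb))

/-- The matrix `(a b; 0 d)`. -/
def matrix (p : HermiteRep N) : FixedDetMatrix (Fin 2) ℤ N :=
  ⟨!![(p.a : ℤ), p.b; 0, p.d], by rw [det_fin_two_of, mul_zero, sub_zero]; exact_mod_cast p.a_mul_d⟩

lemma isPrimitive_matrix (p : HermiteRep N) : IsPrimitive p.matrix.1 := by
  rw [matrix, isPrimitive_iff]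
  simp only [Int.gcd_natCast_natCast, Int.gcd_zero_left, Int.natAbs_natCast]
  rw [Nat.gcd_right_comm, Nat.gcd_comm p.a]
  exact p.coprime

lemma exists_matrix_eq [NeZero N] {a b d : ℤ} (ha : 0 < a) (hdet : a * d = N) (hb : 0 ≤ b)
    (hbd : b < d) (hprim : IsPrimitive !![a, b; 0, d]) :
    ∃ p : HermiteRep N, p.matrix.1 = !![a, b; 0, d] := by
  lift a to ℕ using ha.le
  lift b to ℕ using hb
  lift d to ℕ using (by lia)
  norm_cast at ha hdet hbd
  have hNd : N / d = a := by rw [← hdet, Nat.mul_div_cancel _ (by lia)]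
  refine ⟨⟨⟨d, b⟩, ?_⟩, by simp [matrix, HermiteRep.a, HermiteRep.b, HermiteRep.d, hNd]⟩
  rw [isPrimitive_iff] at hprim
  simp only [Int.gcd_natCast_natCast, Int.gcd_zero_left, Int.natAbs_natCast] at hprim
  simp only [hermiteReps, Finset.mem_sigma, Nat.mem_divisors, Finset.mem_filter, Finset.mem_range]
  refine ⟨⟨⟨a, by rw [← hdet, mul_comm]⟩, NeZero.ne N⟩, hbd, ?_⟩
  rwa [hNd, Nat.gcd_comm d, Nat.Coprime, Nat.gcd_right_comm]

end HermiteRep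

lemma exists_reduce_eq_smul {m : ℤ} (A : FixedDetMatrix (Fin 2) ℤ m) :
    ∃ σ : SL(2, ℤ), FixedDetMatrices.reduce A = σ • A := by
  induction A using FixedDetMatrices.reduce_rec with
  | base A hc =>
    by_cases ha : 0 < A.1 0 0
    · exact ⟨_, FixedDetMatrices.reduce_of_pos hc ha⟩
    · rw [FixedDetMatrices.reduce_of_not_pos hc ha]
      exact ⟨_ * ModularGroup.S * ModularGroup.S, by simp only [mul_smul]; rfl⟩
  | step A hc ih =>
    obtain ⟨σ, hσ⟩ := ih
    rw [FixedDetMatrices.reduce_reduceStep hc] at hσ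
    exact ⟨σ * ModularGroup.S * ModularGroup.T ^ (-(A.1 0 0 / A.1 1 0)),
      by rw [hσ, FixedDetMatrices.reduceStep]; simp only [mul_smul]⟩

lemma exists_eq_smul_matrix [NeZero N] (A : FixedDetMatrix (Fin 2) ℤ N) (hA : IsPrimitive A.1) :
    ∃ (σ : SL(2, ℤ)) (p : HermiteRep N), A = σ • p.matrix := by
  obtain ⟨σ, hσ⟩ := exists_reduce_eq_smul A
  obtain ⟨hc, ha, hb, hbd⟩ := FixedDetMatrices.reduce_mem_reps (mod_cast NeZero.ne N) A
  set B := FixedDetMatrices.reduce A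
  have hB : B.1 = !![B.1 0 0, B.1 0 1; 0, B.1 1 1] := by rw [← hc]; exact eta_fin_two B.1
  have hdet : B.1 0 0 * B.1 1 1 = N := by
    simpa only [det_fin_two, hc, mul_zero, sub_zero] using B.2
  have hd : 0 < B.1 1 1 :=
    pos_of_mul_pos_right (hdet.symm ▸ mod_cast NeZero.pos N) ha.le
  have hA' : A = σ⁻¹ • B := by rw [hσ, inv_smul_smul]
  have hprim : IsPrimitive B.1 := by
    rw [hA', FixedDetMatrices.smul_coe] at hA
    exact hA.of_mul_left
  obtain ⟨p, hp⟩ := HermiteRep.exists_matrix_eq ha hdet hb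
    (by rwa [abs_of_nonneg hb, abs_of_pos hd] at hbd) (hB ▸ hprim)
  exact ⟨σ⁻¹, p, by rw [hA', Subtype.ext (hB.trans hp.symm)]⟩

lemma eq_of_smul_matrix_eq {p q : HermiteRep N} {σ : SL(2, ℤ)} (h : σ • p.matrix = q.matrix) :
    p = q := by
  have entry (i j : Fin 2) : σ i 0 * p.matrix.1 0 j + σ i 1 * p.matrix.1 1 j = q.matrix.1 i j := by
    rw [← h, FixedDetMatrices.smul_coe, mul_apply, Fin.sum_univ_two]
  have h00 : σ 0 0 * p.a = q.a := by simpa [HermiteRep.matrix] using entry 0 0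
  have h01 : σ 0 0 * p.b + σ 0 1 * p.d = q.b := by simpa [HermiteRep.matrix] using entry 0 1
  have h10 : σ 1 0 = 0 ∨ p.a = 0 := by simpa [HermiteRep.matrix] using entry 1 0
  have h11 : σ 1 0 * p.b + σ 1 1 * p.d = q.d := by simpa [HermiteRep.matrix] using entry 1 1
  have hc : σ 1 0 = 0 := h10.resolve_right p.a_pos.ne'
  have hdiag : σ 0 0 * σ 1 1 = 1 := by
    simpa only [det_fin_two, hc, mul_zero, sub_zero] using σ.det_coe
  obtain ⟨hσ0, hσ1⟩ : σ 0 0 = 1 ∧ σ 1 1 = 1 := by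
    refine (Int.mul_eq_one_iff_eq_one_or_neg_one.mp hdiag).resolve_right fun ⟨hneg, _⟩ ↦ ?_
    rw [hneg] at h00
    have := q.a_pos
    lia
  rw [hc, hσ1, zero_mul, zero_add, one_mul] at h11
  rw [hσ0, one_mul] at h01
  have hd : p.d = q.d := mod_cast h11
  refine HermiteRep.ext hd ?_
  have hmod : (q.b : ℤ) % p.d = (p.b : ℤ) % p.d := by rw [← h01, Int.add_mul_emod_self_right]
  rw [Int.emod_eq_of_lt (by lia) (mod_cast hd ▸ q.b_lt_d),
    Int.emod_eq_of_lt (by lia) (mod_cast p.b_lt_d)] at hmod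
  exact_mod_cast hmod.symm

/-- Right multiplication of a matrix of determinant `N` by an element of `SL(2, ℤ)`. -/
def rightMul {m : ℤ} (A : FixedDetMatrix (Fin 2) ℤ m) (σ : SL(2, ℤ)) :
    FixedDetMatrix (Fin 2) ℤ m :=
  ⟨A.1 * σ.1, by rw [det_mul, A.2, σ.2, mul_one]⟩

lemma rightMul_injective {m : ℤ} (σ : SL(2, ℤ)) :
    Function.Injective fun A : FixedDetMatrix (Fin 2) ℤ m ↦ rightMul A σ := by
  refine Function.LeftInverse.injective (g := fun A ↦ rightMul A σ⁻¹) fun A ↦ ?_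
  refine Subtype.ext ?_
  change A.1 * σ.1 * σ⁻¹.1 = A.1
  rw [Matrix.mul_assoc, ← coe_mul, mul_inv_cancel, coe_one, Matrix.mul_one]

lemma rightMul_smul {m : ℤ} (A : FixedDetMatrix (Fin 2) ℤ m) (σ τ : SL(2, ℤ)) :
    rightMul (σ • A) τ = σ • rightMul A τ :=
  Subtype.ext (Matrix.mul_assoc _ _ _)

lemma IsPrimitive.rightMul {m : ℤ} {A : FixedDetMatrix (Fin 2) ℤ m} (hA : IsPrimitive A.1)
    (σ : SL(2, ℤ)) : IsPrimitive (rightMul A σ).1 := by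
  refine IsPrimitive.of_mul_right (A := σ⁻¹.1) ?_
  change IsPrimitive (A.1 * σ.1 * σ⁻¹.1)
  rwa [Matrix.mul_assoc, ← coe_mul, mul_inv_cancel, coe_one,
    Matrix.mul_one]

lemma exists_perm_rightMul_matrix [NeZero N] (σ : SL(2, ℤ)) :
    ∃ e : Equiv.Perm (HermiteRep N),
      ∀ p, ∃ σ' : SL(2, ℤ), rightMul p.matrix σ = σ' • (e p).matrix := by
  choose s f hf using fun p : HermiteRep N ↦
    exists_eq_smul_matrix (rightMul p.matrix σ) (p.isPrimitive_matrix.rightMul σ)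
  have hinj : Function.Injective f := fun p q hpq ↦ by
    refine eq_of_smul_matrix_eq (σ := s q * (s p)⁻¹) (rightMul_injective σ ?_)
    simp only [rightMul_smul, hf, hpq, mul_smul, inv_smul_smul]
  exact ⟨Equiv.ofBijective f (Finite.injective_iff_bijective.mp hinj), fun p ↦ ⟨s p, hf p⟩⟩

section toGL

variable [NeZero N]

/-- A matrix of determinant `N` as an element of `GL(2, ℝ)`, which acts on the upper
half-plane. -/
noncomputable def toGL (A : FixedDetMatrix (Fin 2) ℤ N) : GL (Fin 2) ℝ :=
  GeneralLinearGroup.mkOfDetNeZero (A.1.map (Int.castRingHom ℝ)) <| by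
    rw [← RingHom.mapMatrix_apply, ← RingHom.map_det, A.2]
    simpa using NeZero.ne N

lemma toGL_apply (A : FixedDetMatrix (Fin 2) ℤ N) (i j : Fin 2) : toGL A i j = A.1 i j := rfl

lemma det_toGL (A : FixedDetMatrix (Fin 2) ℤ N) : (toGL A).det.val = N := by
  change (A.1.map (Int.castRingHom ℝ)).det = N
  rw [← RingHom.mapMatrix_apply, ← RingHom.map_det, A.2]
  simp

lemma det_toGL_pos (A : FixedDetMatrix (Fin 2) ℤ N) : 0 < (toGL A).det.val := by
  rw [det_toGL]
  exact_mod_cast NeZero.pos N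

lemma toGL_smul (σ : SL(2, ℤ)) (A : FixedDetMatrix (Fin 2) ℤ N) :
    toGL (σ • A) = mapGL ℝ σ * toGL A :=
  Units.ext (Matrix.map_mul (f := Int.castRingHom ℝ))

lemma toGL_rightMul (A : FixedDetMatrix (Fin 2) ℤ N) (σ : SL(2, ℤ)) :
    toGL (rightMul A σ) = toGL A * mapGL ℝ σ :=
  Units.ext (Matrix.map_mul (f := Int.castRingHom ℝ))

lemma coe_toGL_smul (A : FixedDetMatrix (Fin 2) ℤ N) (τ : ℍ) :
    ((toGL A • τ : ℍ) : ℂ) = (A.1 0 0 * τ + A.1 0 1) / (A.1 1 0 * τ + A.1 1 1) := by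
  rw [coe_smul_of_det_pos (det_toGL_pos A), num, denom]
  simp only [toGL_apply, Complex.ofReal_intCast]

namespace HermiteRep

/-- The matrix `(a b; 0 d)` as an element of `GL(2, ℝ)`. -/
noncomputable def gl (p : HermiteRep N) : GL (Fin 2) ℝ := toGL p.matrix

lemma gl_one_zero (p : HermiteRep N) : p.gl 1 0 = 0 := by
  rw [gl, toGL_apply]
  simp [matrix]

lemma denom_gl (p : HermiteRep N) (τ : ℍ) : denom p.gl τ = p.d := by
  simp only [denom, gl, toGL_apply]
  simp [matrix]

lemma coe_gl_smul (p : HermiteRep N) (τ : ℍ) : ((p.gl • τ : ℍ) : ℂ) = (p.a * τ + p.b) / p.d := by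
  rw [gl, coe_toGL_smul]
  simp [matrix]

lemma im_gl_smul (p : HermiteRep N) (τ : ℍ) : (p.gl • τ).im = p.a / p.d * τ.im := by
  rw [← coe_im, coe_gl_smul, Complex.div_natCast_im]
  simp only [Complex.add_im, Complex.mul_im, Complex.natCast_re, coe_im, Complex.natCast_im, coe_re,
    zero_mul, add_zero]
  ring

lemma tendsto_gl_smul (p : HermiteRep N) : Tendsto (p.gl • · : ℍ → ℍ) atImInfty atImInfty := by
  have hpos : (0 : ℝ) < p.a / p.d :=
    div_pos (mod_cast p.a_pos) (mod_cast p.d_pos)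
  rw [atImInfty, tendsto_comap_iff, show UpperHalfPlane.im ∘ (p.gl • ·) =
    fun τ ↦ (p.a / p.d : ℝ) * τ.im from funext p.im_gl_smul]
  exact tendsto_comap.const_mul_atTop hpos

end HermiteRep

lemma prod_gl_mul_mapGL {α : Type*} [CommMonoid α] (f : GL (Fin 2) ℝ → α)
    (hf : ∀ (σ : SL(2, ℤ)) g, f (mapGL ℝ σ * g) = f g) (σ : SL(2, ℤ)) :
    ∏ p : HermiteRep N, f (p.gl * mapGL ℝ σ) = ∏ p : HermiteRep N, f p.gl := by
  obtain ⟨e, he⟩ := exists_perm_rightMul_matrix (N := N) σ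
  rw [← Equiv.prod_comp e fun p ↦ f p.gl]
  refine Finset.prod_congr rfl fun p _ ↦ ?_
  obtain ⟨σ', hσ'⟩ := he p
  rw [HermiteRep.gl, HermiteRep.gl, ← toGL_rightMul, hσ', toGL_smul, hf]

end toGL

end ModularPolynomial

/-! ### Norm forms -/

namespace ModularPolynomial

open UpperHalfPlane MatrixGroups Filter Matrix.SpecialLinearGroup
open scoped ModularForm

section NormForm

variable {N : ℕ} [NeZero N] {k : ℤ}

lemma slash_gl_apply (F : ℍ → ℂ) (k : ℤ) (p : HermiteRep N) (τ : ℍ) :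
    (F ∣[k] p.gl) τ = F (p.gl • τ) * ((N : ℂ) ^ (k - 1) * (p.d : ℂ) ^ (-k)) := by
  have hσ : σ p.gl = ContinuousAlgEquiv.refl ℝ ℂ := if_pos (det_toGL_pos p.matrix)
  rw [ModularForm.slash_apply, hσ, p.denom_gl, HermiteRep.gl, det_toGL]
  simp [mul_assoc]

lemma prod_slash_gl_slash (F : ModularForm 𝒮ℒ k) (σ : SL(2, ℤ)) :
    (∏ p : HermiteRep N, ⇑F ∣[k] p.gl) ∣[k * Fintype.card (HermiteRep N)] σ =
      ∏ p : HermiteRep N, ⇑F ∣[k] p.gl := by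
  have hinv (σ : SL(2, ℤ)) (g : GL (Fin 2) ℝ) : ⇑F ∣[k] (mapGL ℝ σ * g) = ⇑F ∣[k] g := by
    rw [SlashAction.slash_mul]
    exact congrArg (· ∣[k] g) (F.slash_action_eq' _ ⟨σ, rfl⟩)
  rw [ModularForm.SL_slash, ← Finset.card_univ, ModularForm.prod_slash]
  simp only [← SlashAction.slash_mul]
  change _ • ∏ p : HermiteRep N, ⇑F ∣[k] (p.gl * mapGL ℝ σ) = _
  rw [prod_gl_mul_mapGL (fun g ↦ ⇑F ∣[k] g) hinv]
  simp

/-- The norm of a level one form `F` along the Hecke correspondence of primitive matrices of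
determinant `N`. -/
noncomputable def normForm (N : ℕ) [NeZero N] (F : ModularForm 𝒮ℒ k) :
    ModularForm 𝒮ℒ (k * Fintype.card (HermiteRep N)) where
  toFun := ∏ p : HermiteRep N, ⇑F ∣[k] p.gl
  slash_action_eq' := by
    rintro _ ⟨σ, rfl⟩
    exact prod_slash_gl_slash F σ
  holo' := MDifferentiable.prod fun p _ ↦ F.holo'.slash k p.gl
  bdd_at_cusps' hc := by
    rw [Subgroup.IsArithmetic.isCusp_iff_isCusp_SL2Z] at hc
    rw [OnePoint.isBoundedAt_iff_forall_SL2Z hc]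
    intro σ _
    rw [prod_slash_gl_slash]
    refine Filter.BoundedAtFilter.prod (s := Finset.univ) fun p _ ↦ ?_
    exact IsBoundedAtImInfty.slash k p.gl_one_zero
      (ModularFormClass.bdd_at_infty F)

lemma exists_normForm_eq (N : ℕ) [NeZero N] (k : ℤ) :
    ∃ c : ℂ, c ≠ 0 ∧ ∀ (F : ModularForm 𝒮ℒ k) (τ : ℍ),
      normForm N F τ = c * ∏ p : HermiteRep N, F (p.gl • τ) := by
  refine ⟨∏ p : HermiteRep N, ((N : ℂ) ^ (k - 1) * (p.d : ℂ) ^ (-k)),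
    Finset.prod_ne_zero_iff.mpr fun p _ ↦ mul_ne_zero (zpow_ne_zero _ (NeZero.ne _))
      (zpow_ne_zero _ (mod_cast p.d_pos.ne')), fun F τ ↦ ?_⟩
  change (∏ p : HermiteRep N, ⇑F ∣[k] p.gl) τ = _
  simp only [Finset.prod_apply, slash_gl_apply, Finset.prod_mul_distrib]
  ring

end NormForm

end ModularPolynomial

/-! ### The Dedekind psi function -/

namespace ModularPolynomial

open Finset

/-- The number of primitive Hermite matrices of determinant `N` with lower right entry `d`. -/
def repCount (N d : ℕ) : ℕ := d / d.gcd (N / d) * (d.gcd (N / d)).totient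

lemma count_coprime_mul (g k : ℕ) : Nat.count g.Coprime (g * k) = k * g.totient := by
  induction k with
  | zero => simp
  | succ k ih =>
    rw [mul_add_one, Nat.count_add, ih, add_mul, one_mul, Nat.totient_eq_card_coprime,
      ← Nat.count_eq_card_filter_range]
    simp only [Nat.coprime_mul_left_add_right]

lemma card_filter_coprime_range (N d : ℕ) :
    #{b ∈ range d | (d.gcd (N / d)).Coprime b} = repCount N d := by
  rw [← Nat.count_eq_card_filter_range, repCount, ← count_coprime_mul,
    Nat.mul_div_cancel' (Nat.gcd_dvd_left _ _)]

lemma sum_hermiteRep {R : Type*} [Semiring R] (N : ℕ) (f : ℕ → R) :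
    ∑ p : HermiteRep N, f p.d = ∑ d ∈ N.divisors, repCount N d * f d := by
  rw [show ∑ p : HermiteRep N, f p.d = ∑ q ∈ hermiteReps N, f q.1 from
    sum_coe_sort (hermiteReps N) fun q ↦ f q.1, hermiteReps, sum_sigma]
  simp only [sum_const, card_filter_coprime_range, nsmul_eq_mul]

lemma repCount_div {N d : ℕ} (hN : N ≠ 0) (hd : d ∣ N) :
    (repCount N (N / d) : ℝ) = repCount N d * ((N / d : ℕ) / d) := by
  obtain ⟨a, rfl⟩ := hd
  have hd₀ : 0 < d := Nat.pos_of_ne_zero (left_ne_zero_of_mul hN)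
  have ha₀ : 0 < a := Nat.pos_of_ne_zero (right_ne_zero_of_mul hN)
  simp only [repCount, Nat.mul_div_cancel_left a hd₀, Nat.mul_div_cancel d ha₀, Nat.gcd_comm a d]
  have hg : 0 < d.gcd a := Nat.gcd_pos_of_pos_left _ hd₀
  push_cast [Nat.cast_div (Nat.gcd_dvd_left d a) (mod_cast hg.ne' : ((d.gcd a : ℕ) : ℝ) ≠ 0),
    Nat.cast_div (Nat.gcd_dvd_right d a) (mod_cast hg.ne' : ((d.gcd a : ℕ) : ℝ) ≠ 0)]
  field_simp

lemma repCount_mul_mul {M N d e : ℕ} (h : M.Coprime N) (hd : d ∣ M) (he : e ∣ N) :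
    repCount (M * N) (d * e) = repCount M d * repCount N e := by
  have hdiv : M * N / (d * e) = M / d * (N / e) := Nat.mul_div_mul_comm hd he
  have hMd : M / d ∣ M := Nat.div_dvd_of_dvd hd
  have hNe : N / e ∣ N := Nat.div_dvd_of_dvd he
  have hgcd : (d * e).gcd (M / d * (N / e)) = d.gcd (M / d) * e.gcd (N / e) := by
    rw [Nat.Coprime.gcd_mul _ (h.of_dvd hMd hNe),
      Nat.Coprime.gcd_mul_right_cancel _ (h.symm.of_dvd he hMd),
      Nat.Coprime.gcd_mul_left_cancel _ (h.of_dvd hd hNe)]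
  have hcop : (d.gcd (M / d)).Coprime (e.gcd (N / e)) :=
    h.of_dvd ((Nat.gcd_dvd_left _ _).trans hd) ((Nat.gcd_dvd_left _ _).trans he)
  simp only [repCount]
  rw [hdiv, hgcd, Nat.totient_mul hcop,
    Nat.mul_div_mul_comm (Nat.gcd_dvd_left _ _) (Nat.gcd_dvd_left _ _)]
  ring

lemma sum_repCount_mul_of_coprime {M N : ℕ} (h : M.Coprime N) (f : ℕ → ℝ) :
    ∑ d ∈ (M * N).divisors, repCount (M * N) d * f d =
      ∑ d ∈ M.divisors, ∑ e ∈ N.divisors, repCount M d * repCount N e * f (d * e) := by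
  rw [Nat.divisors_mul, ← sum_product', mul_def, sum_image fun x hx y hy hxy ↦
    h.mul_injOn_divisors (by simpa using hx) (by simpa using hy) hxy]
  refine sum_congr rfl fun x hx ↦ ?_
  rw [mem_product] at hx
  rw [repCount_mul_mul h (Nat.dvd_of_mem_divisors hx.1) (Nat.dvd_of_mem_divisors hx.2),
    Nat.cast_mul]

lemma repCount_prime_pow_self {p : ℕ} (hp : p.Prime) (n : ℕ) :
    repCount (p ^ n) (p ^ n) = p ^ n := by
  simp [repCount, Nat.div_self (pow_pos hp.pos n)]

lemma repCount_prime_pow {p n i : ℕ} (hp : p.Prime) (hi : i + 1 < n) :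
    (repCount (p ^ n) (p ^ (i + 1)) : ℝ) = (p : ℝ) ^ (i + 1) - (p : ℝ) ^ i := by
  obtain ⟨k, hgcd, hki⟩ : ∃ k, (p ^ (i + 1)).gcd (p ^ n / p ^ (i + 1)) = p ^ (k + 1) ∧ k ≤ i := by
    rw [Nat.pow_div hi.le hp.pos]
    rcases le_total (i + 1) (n - (i + 1)) with hle | hle
    · exact ⟨i, Nat.gcd_eq_left (pow_dvd_pow p hle), le_rfl⟩
    · exact ⟨n - (i + 1) - 1, by rw [Nat.gcd_eq_right (pow_dvd_pow p hle)]; congr 1; lia, by lia⟩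
  rw [repCount, hgcd, Nat.totient_prime_pow_succ hp, Nat.pow_div (by lia) hp.pos, ← mul_assoc,
    ← pow_add, show i + 1 - (k + 1) + k = i by lia]
  push_cast [Nat.cast_sub hp.one_le]
  ring

lemma sum_repCount_prime_pow {p : ℕ} (hp : p.Prime) (n : ℕ) (f : ℕ → ℝ) :
    ∑ d ∈ (p ^ (n + 1)).divisors, repCount (p ^ (n + 1)) d * f d =
      f 1 + ∑ i ∈ range n, ((p : ℝ) ^ (i + 1) - (p : ℝ) ^ i) * f (p ^ (i + 1)) +
        (p : ℝ) ^ (n + 1) * f (p ^ (n + 1)) := by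
  rw [Nat.divisors_prime_pow hp, sum_map, sum_range_succ, sum_range_succ']
  simp only [Function.Embedding.coeFn_mk, repCount_prime_pow_self hp, Nat.cast_pow, pow_zero]
  rw [sum_congr rfl fun i hi ↦ by rw [repCount_prime_pow hp (by have := mem_range.mp hi; lia)]]
  simp [repCount, add_comm]

lemma sum_pow_succ_sub_pow_mul {K : Type*} [Field K] {x : K} (hx : x ≠ 1) (n : ℕ) :
    ∑ i ∈ range n, (x ^ (i + 1) - x ^ i) * ((i : K) + 1) =
      (n + 1) * x ^ n - (x ^ (n + 1) - 1) / (x - 1) := by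
  have : x - 1 ≠ 0 := sub_ne_zero.mpr hx
  induction n with
  | zero => simp [this]
  | succ n ih =>
    rw [sum_range_succ, ih]
    push_cast
    field_simp
    ring

lemma dedekindPsi_eq (N : ℕ) :
    (dedekindPsi N : ℝ) = N * ∏ p ∈ N.primeFactors, (1 + 1 / (p : ℝ)) := by
  have hpos (p : ℕ) (hp : p ∈ N.primeFactors) : (p : ℝ) ≠ 0 :=
    mod_cast (Nat.prime_of_mem_primeFactors hp).ne_zero
  rw [dedekindPsi, Nat.cast_div ((Nat.prod_primeFactors_dvd N).mul_right _)
    (by rw [Nat.cast_prod]; exact prod_ne_zero_iff.mpr hpos), Nat.cast_mul, mul_div_assoc]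
  push_cast
  rw [← prod_div_distrib]
  exact congrArg _ (prod_congr rfl fun p hp ↦ by rw [add_div, div_self (hpos p hp)])

lemma dedekindPsi_pos (N : ℕ) [NeZero N] : 0 < dedekindPsi N := by
  have hN : (0 : ℝ) < N := mod_cast Nat.pos_of_neZero N
  have : (0 : ℝ) < dedekindPsi N := by
    rw [dedekindPsi_eq]
    positivity
  exact_mod_cast this

lemma dedekindPsi_mul {M N : ℕ} (h : M.Coprime N) :
    (dedekindPsi (M * N) : ℝ) = dedekindPsi M * dedekindPsi N := by
  rw [dedekindPsi_eq, dedekindPsi_eq, dedekindPsi_eq, h.primeFactors_mul,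
    prod_union h.disjoint_primeFactors, Nat.cast_mul]
  ring

lemma dedekindPsi_prime_pow {p : ℕ} (hp : p.Prime) (n : ℕ) :
    (dedekindPsi (p ^ (n + 1)) : ℝ) = (p : ℝ) ^ (n + 1) + (p : ℝ) ^ n := by
  have := hp.ne_zero
  rw [dedekindPsi_eq, Nat.primeFactors_prime_pow n.succ_ne_zero hp, prod_singleton]
  push_cast
  field_simp
  ring

lemma lambdaN_mul {M N : ℕ} (h : M.Coprime N) : lambdaN (M * N) = lambdaN M + lambdaN N := by
  rw [lambdaN, h.primeFactors_mul, sum_union h.disjoint_primeFactors, lambdaN, lambdaN]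
  congr 1 <;> refine sum_congr rfl fun p hp ↦ ?_
  · rw [Nat.factorization_eq_of_coprime_left h
      (Nat.mem_primeFactors_iff_mem_primeFactorsList.mp hp)]
  · rw [Nat.factorization_eq_of_coprime_right h
      (Nat.mem_primeFactors_iff_mem_primeFactorsList.mp hp)]

lemma lambdaN_prime_pow {p : ℕ} (hp : p.Prime) (n : ℕ) :
    lambdaN (p ^ (n + 1)) =
      ((p : ℝ) ^ (n + 1) - 1) / ((p : ℝ) ^ n * ((p : ℝ) ^ 2 - 1)) * Real.log p := by
  rw [lambdaN, Nat.primeFactors_prime_pow n.succ_ne_zero hp, sum_singleton, hp.factorization_pow,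
    Finsupp.single_eq_same, Nat.add_sub_cancel]

lemma sum_repCount (N : ℕ) : ∑ d ∈ N.divisors, (repCount N d : ℝ) = dedekindPsi N := by
  induction N using Nat.recOnPosPrimePosCoprime with
  | prime_pow p n hp hn =>
    obtain ⟨n, rfl⟩ := Nat.exists_eq_add_one.mpr hn
    have := sum_repCount_prime_pow hp n 1
    simp only [Pi.one_apply, mul_one] at this
    rw [this, sum_range_sub fun i ↦ (p : ℝ) ^ i, dedekindPsi_prime_pow hp]
    ring
  | zero => simp [dedekindPsi]
  | one => simp [repCount, dedekindPsi]
  | coprime M N _ _ h ihM ihN =>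
    have := sum_repCount_mul_of_coprime h 1
    simp only [Pi.one_apply, mul_one] at this
    rw [this, dedekindPsi_mul h, ← ihM, ← ihN, sum_mul_sum]

lemma sum_repCount_mul_log_prime_pow {p : ℕ} (hp : p.Prime) (n : ℕ) :
    ∑ d ∈ (p ^ (n + 1)).divisors, repCount (p ^ (n + 1)) d * Real.log d =
      dedekindPsi (p ^ (n + 1)) * (Real.log (p ^ (n + 1) : ℕ) - lambdaN (p ^ (n + 1))) := by
  have hp₁ : (p : ℝ) ≠ 1 := mod_cast hp.ne_one
  have hlog (i : ℕ) : Real.log (p ^ (i + 1) : ℕ) = (i + 1) * Real.log p := by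
    rw [Nat.cast_pow, Real.log_pow, Nat.cast_succ]
  have hsum : ∑ i ∈ range n, ((p : ℝ) ^ (i + 1) - (p : ℝ) ^ i) * Real.log (p ^ (i + 1) : ℕ) =
      ((n + 1) * (p : ℝ) ^ n - ((p : ℝ) ^ (n + 1) - 1) / (p - 1)) * Real.log p := by
    rw [← sum_pow_succ_sub_pow_mul hp₁, sum_mul]
    exact sum_congr rfl fun i _ ↦ by rw [hlog, mul_assoc]
  rw [sum_repCount_prime_pow hp n fun d ↦ Real.log d, hsum, hlog, lambdaN_prime_pow hp,
    dedekindPsi_prime_pow hp, Nat.cast_one, Real.log_one,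
    show (p : ℝ) ^ 2 - 1 = (p - 1) * (p + 1) by ring]
  have : (p : ℝ) ≠ 0 := mod_cast hp.ne_zero
  have : (p : ℝ) - 1 ≠ 0 := sub_ne_zero.mpr hp₁
  have : (p : ℝ) + 1 ≠ 0 := by positivity
  field_simp
  ring

lemma sum_repCount_mul_log (N : ℕ) :
    ∑ d ∈ N.divisors, repCount N d * Real.log d =
      dedekindPsi N * (Real.log N - lambdaN N) := by
  induction N using Nat.recOnPosPrimePosCoprime with
  | prime_pow p n hp hn =>
    obtain ⟨n, rfl⟩ := Nat.exists_eq_add_one.mpr hn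
    exact sum_repCount_mul_log_prime_pow hp n
  | zero => simp [dedekindPsi]
  | one => simp [lambdaN]
  | coprime M N hM hN h ihM ihN =>
    have hM₀ : (M : ℝ) ≠ 0 := by positivity
    have hN₀ : (N : ℝ) ≠ 0 := by positivity
    have hlog (d : ℕ) (hd : d ∈ M.divisors) (e : ℕ) (he : e ∈ N.divisors) :
        (repCount M d * repCount N e : ℝ) * Real.log (d * e : ℕ) =
          repCount M d * Real.log d * repCount N e +
            repCount M d * (repCount N e * Real.log e) := by
      rw [Nat.cast_mul, Real.log_mul (mod_cast (Nat.pos_of_mem_divisors hd).ne')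
        (mod_cast (Nat.pos_of_mem_divisors he).ne')]
      ring
    rw [sum_repCount_mul_of_coprime h fun d ↦ Real.log d,
      sum_congr rfl fun d hd ↦ sum_congr rfl fun e he ↦ hlog d hd e he]
    simp only [sum_add_distrib, ← sum_mul_sum]
    rw [ihM, ihN, sum_repCount, sum_repCount, dedekindPsi_mul h, lambdaN_mul h, Nat.cast_mul,
      Real.log_mul hM₀ hN₀]
    ring

lemma card_hermiteRep (N : ℕ) : Fintype.card (HermiteRep N) = dedekindPsi N := by
  have hcard := sum_hermiteRep N fun _ ↦ (1 : ℝ)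
  simp only [sum_const, card_univ, nsmul_eq_mul, mul_one] at hcard
  exact_mod_cast hcard.trans (sum_repCount N)

lemma sum_a_div_d (N : ℕ) [NeZero N] :
    ∑ p : HermiteRep N, (p.a : ℝ) / p.d = dedekindPsi N := by
  rw [← sum_repCount, ← Nat.sum_div_divisors N fun d ↦ (repCount N d : ℝ)]
  refine (sum_hermiteRep N fun d ↦ ((N / d : ℕ) : ℝ) / d).trans (sum_congr rfl fun d hd ↦ ?_)
  exact (repCount_div (NeZero.ne N) (Nat.dvd_of_mem_divisors hd)).symm

lemma sum_log_d (N : ℕ) :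
    ∑ p : HermiteRep N, Real.log p.d = dedekindPsi N * (Real.log N - lambdaN N) :=
  (sum_hermiteRep N fun d ↦ Real.log d).trans (sum_repCount_mul_log N)

lemma pow_sub_one_div_le {x : ℝ} (hx : 2 ≤ x) (n : ℕ) :
    (x ^ (n + 1) - 1) / (x ^ n * (x ^ 2 - 1)) ≤ (n + 1) / 3 := by
  have hsum : ∑ i ∈ range (n + 1), x ^ i ≤ (n + 1) * x ^ n := by
    refine (sum_le_card_nsmul _ _ (x ^ n) fun i hi ↦
      pow_le_pow_right₀ (by linarith) (Nat.lt_succ_iff.mp (mem_range.mp hi))).trans ?_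
    simp
  have hx₁ : 0 < x - 1 := by linarith
  rw [← mul_geom_sum, show x ^ n * (x ^ 2 - 1) = (x - 1) * (x ^ n * (x + 1)) by ring,
    mul_div_mul_left _ _ hx₁.ne', div_le_div_iff₀ (by positivity) (by norm_num)]
  calc (∑ i ∈ range (n + 1), x ^ i) * 3 ≤ ((n + 1) * x ^ n) * (x + 1) := by gcongr; linarith
    _ = (n + 1) * (x ^ n * (x + 1)) := by ring

lemma lambdaN_le (N : ℕ) : lambdaN N ≤ Real.log N / 3 := by
  rw [Real.log_nat_eq_sum_factorization, Finsupp.sum, Nat.support_factorization, lambdaN, sum_div]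
  refine sum_le_sum fun p hp ↦ ?_
  have hp' := Nat.prime_of_mem_primeFactors hp
  obtain ⟨n, hn⟩ := Nat.exists_eq_add_one.mpr
    (hp'.factorization_pos_of_dvd (Nat.mem_primeFactors.mp hp).2.2 (Nat.dvd_of_mem_primeFactors hp))
  rw [hn, Nat.add_sub_cancel, Nat.cast_succ, ← div_mul_eq_mul_div]
  exact mul_le_mul_of_nonneg_right (pow_sub_one_div_le (mod_cast hp'.two_le) n)
    (Real.log_natCast_nonneg p)

end ModularPolynomial

/-! ### Products over the Hermite matrices -/

namespace ModularPolynomial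

open UpperHalfPlane MatrixGroups Polynomial Filter
open scoped Real ModularForm Topology

lemma sigma_three_add_two_le (n : ℕ) : ArithmeticFunction.sigma 3 (n + 2) ≤ 9 * 4 ^ n := by
  rcases Nat.lt_or_ge n 4 with hn | hn
  · interval_cases n <;> decide
  · refine (ArithmeticFunction.sigma_le_pow_succ 3 (n + 2)).trans ?_
    induction n, hn using Nat.le_induction with
    | base => norm_num
    | succ n hn ih =>
      have hstep : (n + 1 + 2) ^ 4 ≤ 4 * (n + 2) ^ 4 :=
        calc (n + 1 + 2) ^ 4 = ((n + 3) ^ 2) ^ 2 := by ring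
          _ ≤ (2 * (n + 2) ^ 2) ^ 2 := Nat.pow_le_pow_left (by nlinarith) 2
          _ = 4 * (n + 2) ^ 4 := by ring
      rw [pow_succ 4]
      simp only [Nat.reduceAdd] at ih ⊢
      omega

lemma norm_E₄_sub_one_sub_le {q : ℂ} (hq : ‖q‖ < 1 / 4) :
    ‖E₄ q - 1 - 240 * q‖ ≤ 2160 * ‖q‖ ^ 2 / (1 - 4 * ‖q‖) := by
  set r := ‖q‖
  have : 0 ≤ r := norm_nonneg q
  let a (n : ℕ) : ℂ := (ArithmeticFunction.sigma 3 (n + 1) : ℂ) * q ^ (n + 1)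
  have ha (n : ℕ) : ‖a (n + 1)‖ ≤ 9 * r ^ 2 * (4 * r) ^ n := by
    have hσ : (ArithmeticFunction.sigma 3 (n + 2) : ℝ) ≤ 9 * 4 ^ n :=
      mod_cast sigma_three_add_two_le n
    rw [norm_mul, norm_pow, Complex.norm_natCast]
    calc _ ≤ (9 * 4 ^ n) * r ^ (n + 2) := mul_le_mul_of_nonneg_right hσ (by positivity)
      _ = _ := by rw [mul_pow, pow_add]; ring
  have hgeom : HasSum (fun n ↦ 9 * r ^ 2 * (4 * r) ^ n) (9 * r ^ 2 * (1 - 4 * r)⁻¹) :=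
    (hasSum_geometric_of_lt_one (by positivity) (by linarith)).mul_left _
  have hsum : Summable a :=
    (summable_nat_add_iff 1).mp (Summable.of_norm_bounded hgeom.summable ha)
  have htail : E₄ q - 1 - 240 * q = 240 * ∑' n, a (n + 1) := by
    rw [E₄, hsum.tsum_eq_zero_add]
    simp only [zero_add, ArithmeticFunction.sigma_one, Nat.cast_one, pow_one, one_mul,
      add_sub_cancel_left, a]
    ring
  calc ‖E₄ q - 1 - 240 * q‖ = 240 * ‖∑' n, a (n + 1)‖ := by simp [htail]
    _ ≤ 240 * (9 * r ^ 2 * (1 - 4 * r)⁻¹) :=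
      mul_le_mul_of_nonneg_left (tsum_of_norm_bounded hgeom ha) (by norm_num)
    _ = 2160 * r ^ 2 / (1 - 4 * r) := by ring

lemma tendsto_E₄_zero : Tendsto E₄ (𝓝 0) (𝓝 1) := by
  have hnorm : Tendsto (‖·‖ : ℂ → ℝ) (𝓝 0) (𝓝 0) := tendsto_norm_zero
  have hbound : Tendsto (fun q : ℂ ↦ 2160 * ‖q‖ ^ 2 / (1 - 4 * ‖q‖)) (𝓝 0) (𝓝 0) := by
    simpa [Pi.div_def] using
      ((hnorm.pow 2).const_mul 2160).div ((hnorm.const_mul 4).const_sub 1) (by norm_num)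
  have hdiff : Tendsto (fun q ↦ E₄ q - 1 - 240 * q) (𝓝 0) (𝓝 0) := by
    refine squeeze_zero_norm' ?_ hbound
    filter_upwards [hnorm.eventually_lt_const (by norm_num : (0 : ℝ) < 1 / 4)] with q hq
    exact norm_E₄_sub_one_sub_le hq
  have hlin : Tendsto (fun q : ℂ ↦ 1 + 240 * q) (𝓝 0) (𝓝 1) := by
    simpa using ((tendsto_id (x := 𝓝 (0 : ℂ))).const_mul 240).const_add 1
  convert hdiff.add hlin using 2 <;> ring

lemma norm_nome (τ : ℍ) : ‖nome τ‖ = Real.exp (-2 * π * τ.im) := by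
  rw [nome, Complex.norm_exp]
  simp

lemma nome_ne_zero (τ : ℍ) : nome τ ≠ 0 := Complex.exp_ne_zero _

lemma tendsto_nome : Tendsto nome atImInfty (𝓝 0) := by
  rw [tendsto_zero_iff_norm_tendsto_zero, funext norm_nome]
  exact Real.tendsto_exp_atBot.comp
    (tendsto_comap.const_mul_atTop_of_neg (by linarith [Real.pi_pos]))

/-- The 24th power of Euler's product, `Δ(q) / q`. -/
noncomputable def eulerProd (q : ℂ) : ℂ := ∏' n : ℕ, (1 - q ^ (n + 1)) ^ 24

lemma discriminant_eq_nome_mul (τ : ℍ) :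
    ModularForm.discriminant τ = nome τ * eulerProd (nome τ) := by
  rw [← Δ_nome, Δ, eulerProd]

lemma eulerProd_nome_ne_zero (τ : ℍ) : eulerProd (nome τ) ≠ 0 :=
  right_ne_zero_of_mul (discriminant_eq_nome_mul τ ▸ ModularForm.discriminant_ne_zero τ)

lemma tendsto_eulerProd_nome : Tendsto (fun τ ↦ eulerProd (nome τ)) atImInfty (𝓝 1) := by
  refine ModularForm.tendsto_atImInfty_tprod_one_sub_eta_q_pow.congr fun τ ↦ ?_
  simp only [eulerProd, nome, ModularForm.eta_q_eq_pow]

lemma tendsto_kleinJ_mul_nome : Tendsto (fun τ ↦ kleinJ τ * nome τ) atImInfty (𝓝 1) := by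
  have hlim := ((tendsto_E₄_zero.comp tendsto_nome).pow 3).div tendsto_eulerProd_nome one_ne_zero
  rw [one_pow, div_one] at hlim
  refine hlim.congr fun τ ↦ ?_
  have hq := nome_ne_zero τ
  have hprod := eulerProd_nome_ne_zero τ
  simp only [Function.comp_apply, Pi.div_apply, E₄_nome, kleinJ, discriminant_eq_nome_mul]
  field_simp

lemma tendsto_norm_kleinJ : Tendsto (fun τ ↦ ‖kleinJ τ‖) atImInfty atTop := by
  have hinv : Tendsto (fun τ ↦ ‖nome τ‖⁻¹) atImInfty atTop :=
    tendsto_inv_nhdsGT_zero.comp (tendsto_nhdsWithin_iff.mpr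
      ⟨tendsto_nome.norm.trans (by simp), .of_forall fun τ ↦ norm_pos_iff.mpr (nome_ne_zero τ)⟩)
  refine (tendsto_kleinJ_mul_nome.norm.pos_mul_atTop (by simp) hinv).congr fun τ ↦ ?_
  rw [norm_mul, mul_inv_cancel_right₀ (norm_ne_zero_iff.mpr (nome_ne_zero τ))]

/-- `Δ` as a modular form of weight 12. -/
noncomputable def discriminantForm : ModularForm 𝒮ℒ 12 :=
  CuspForm.toModularFormₗ CuspForm.discriminant

lemma discriminantForm_apply (τ : ℍ) : discriminantForm τ = ModularForm.discriminant τ := rfl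

/-- The weight 12 modular form `(x - j) Δ`. -/
noncomputable def subKleinJForm (x : ℂ) : ModularForm 𝒮ℒ 12 :=
  x • discriminantForm - ModularForm.mcast (by norm_num) (ModularForm.E₄.pow 3)

lemma subKleinJForm_apply (x : ℂ) (τ : ℍ) :
    subKleinJForm x τ = (x - kleinJ τ) * ModularForm.discriminant τ := by
  have hpow : ModularForm.E₄.pow 3 τ = ModularForm.E₄ τ ^ 3 := by
    rw [ModularForm.coe_pow, Pi.pow_apply]
  rw [sub_mul, kleinJ, div_mul_cancel₀ _ (ModularForm.discriminant_ne_zero τ), ← hpow]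
  rfl

section HeckeProduct

variable (N : ℕ) [NeZero N]

lemma prod_norm_nome_gl_smul (τ : ℍ) :
    ∏ p : HermiteRep N, ‖nome (p.gl • τ)‖ = ‖nome τ‖ ^ Fintype.card (HermiteRep N) := by
  simp only [norm_nome, HermiteRep.im_gl_smul, ← Real.exp_sum, ← Real.exp_nat_mul,
    ← mul_assoc, ← Finset.sum_mul, ← Finset.mul_sum, sum_a_div_d, card_hermiteRep]
  ring_nf

lemma tendsto_norm_prod_discriminant_div :
    Tendsto (fun τ ↦ ‖∏ p : HermiteRep N, ModularForm.discriminant (p.gl • τ)‖ /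
      ‖ModularForm.discriminant τ‖ ^ Fintype.card (HermiteRep N)) atImInfty (𝓝 1) := by
  have heuler : Tendsto (fun τ ↦ ‖eulerProd (nome τ)‖) atImInfty (𝓝 1) := by
    simpa using tendsto_eulerProd_nome.norm
  have hlim := (tendsto_finsetProd Finset.univ fun (p : HermiteRep N) _ ↦
    heuler.comp p.tendsto_gl_smul).div (heuler.pow (Fintype.card (HermiteRep N))) (by simp)
  simp only [Finset.prod_const_one, one_pow, div_one] at hlim
  refine hlim.congr fun τ ↦ ?_
  have hq : ‖nome τ‖ ^ Fintype.card (HermiteRep N) ≠ 0 := by simp [nome_ne_zero]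
  simp only [discriminant_eq_nome_mul, norm_mul, norm_prod, Finset.prod_mul_distrib, mul_pow,
    prod_norm_nome_gl_smul, Pi.div_apply, Function.comp_apply]
  rw [mul_div_mul_left _ _ hq]

lemma eq_C_of_tendsto_norm_eval_kleinJ {P : ℂ[X]} {l : ℝ}
    (hP : Tendsto (fun τ ↦ ‖P.eval (kleinJ τ)‖) atImInfty (𝓝 l)) : P = C (P.coeff 0) := by
  refine eq_C_of_degree_le_zero (le_of_not_gt fun hdeg ↦ ?_)
  exact not_tendsto_nhds_of_tendsto_atTop (P.tendsto_norm_atTop hdeg tendsto_norm_kleinJ) l hP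

lemma exists_prod_discriminant_eq : ∃ c : ℂ, ‖c‖ = 1 ∧ ∀ τ : ℍ,
    ∏ p : HermiteRep N, ModularForm.discriminant (p.gl • τ) =
      c * ModularForm.discriminant τ ^ Fintype.card (HermiteRep N) := by
  obtain ⟨K, hK, hnorm⟩ := exists_normForm_eq N 12
  obtain ⟨P, hP⟩ := exists_eval_kleinJ _ (normForm N discriminantForm)
  simp only [hnorm, discriminantForm_apply, mul_div_assoc] at hP
  have hΔ (τ : ℍ) := pow_ne_zero (Fintype.card (HermiteRep N)) (ModularForm.discriminant_ne_zero τ)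
  have hlim : Tendsto (fun τ ↦ ‖P.eval (kleinJ τ)‖) atImInfty (𝓝 ‖K‖) := by
    simpa [← hP] using (tendsto_norm_prod_discriminant_div N).const_mul ‖K‖
  have hconst := eq_C_of_tendsto_norm_eval_kleinJ hlim
  have hcoeff : ‖P.coeff 0‖ = ‖K‖ := by
    rw [hconst] at hlim
    simp only [eval_C] at hlim
    exact tendsto_nhds_unique tendsto_const_nhds hlim
  refine ⟨P.coeff 0 / K, ?_, fun τ ↦ ?_⟩
  · rw [norm_div, hcoeff, div_self (norm_ne_zero_iff.mpr hK)]
  · have h := hP τ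
    rw [hconst, eval_C] at h
    rw [← div_eq_iff (hΔ τ), ← h, mul_div_cancel_left₀ _ hK]

lemma exists_prod_sub_kleinJ_eq_eval (x : ℂ) : ∃ P : ℂ[X], ∀ τ : ℍ,
    ∏ p : HermiteRep N, (x - kleinJ (p.gl • τ)) = P.eval (kleinJ τ) := by
  obtain ⟨K, hK, hnorm⟩ := exists_normForm_eq N 12
  obtain ⟨P, hP⟩ := exists_eval_kleinJ _ (normForm N (subKleinJForm x))
  obtain ⟨c, hc, hΔprod⟩ := exists_prod_discriminant_eq N
  have hc : c ≠ 0 := norm_ne_zero_iff.mp (hc ▸ one_ne_zero)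
  refine ⟨C (K * c)⁻¹ * P, fun τ ↦ ?_⟩
  have hΔ := pow_ne_zero (Fintype.card (HermiteRep N)) (ModularForm.discriminant_ne_zero τ)
  rw [eval_mul, eval_C, ← hP, hnorm]
  simp only [subKleinJForm_apply, Finset.prod_mul_distrib, hΔprod]
  field_simp

end HeckeProduct

end ModularPolynomial

/-! ### Isogenies and separation of `j`-values -/

namespace ModularPolynomial

open UpperHalfPlane MatrixGroups Polynomial Filter
open scoped Real ModularForm Topology

section Bivariate

lemma exists_mul_add_mul_derivative_eq_C {A : Type*} [CommRing A] [IsDomain A]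
    [IsIntegrallyClosed A] [CharZero A] {W : A[X]} (hmonic : W.Monic) (hirr : Irreducible W) :
    ∃ r : A, r ≠ 0 ∧ ∃ a b : A[X], a * W + b * derivative W = C r := by
  obtain ⟨u, v, huv⟩ :=
    ((hmonic.irreducible_iff_irreducible_map_fraction_map (K := FractionRing A)).mp hirr).separable
  obtain ⟨s, hs, hu⟩ := IsLocalization.integerNormalization_spec (nonZeroDivisors A) u
  obtain ⟨t, ht, hv⟩ := IsLocalization.integerNormalization_spec (nonZeroDivisors A) v
  refine ⟨s * t, mul_ne_zero (nonZeroDivisors.ne_zero hs) (nonZeroDivisors.ne_zero ht),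
    C t * IsLocalization.integerNormalization (nonZeroDivisors A) u,
    C s * IsLocalization.integerNormalization (nonZeroDivisors A) v,
    map_injective (algebraMap A (FractionRing A)) (IsFractionRing.injective _ _) ?_⟩
  have hsmul (c : A) (p : (FractionRing A)[X]) : c • p = C (algebraMap A _ c) * p := by
    rw [Algebra.smul_def]
    rfl
  simp only [Polynomial.map_add, Polynomial.map_mul, map_C, hu, hv, hsmul, ← derivative_map,
    map_mul]
  linear_combination
    (C (algebraMap A (FractionRing A) s) * C (algebraMap A (FractionRing A) t)) * huv

/-- A polynomial in `X` and `Y` as a polynomial in `X` with coefficients in `ℤ[Y]`. -/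
noncomputable def toBivariate : MvPolynomial (Fin 2) ℤ ≃ₐ[ℤ] ℤ[X][X] :=
  (MvPolynomial.finSuccEquiv ℤ 1).trans (mapAlgEquiv (MvPolynomial.uniqueAlgEquiv ℤ (Fin 1)))

lemma toBivariate_apply (P : MvPolynomial (Fin 2) ℤ) :
    toBivariate P = (MvPolynomial.finSuccEquiv ℤ 1 P).map
      (MvPolynomial.uniqueAlgEquiv ℤ (Fin 1) : MvPolynomial (Fin 1) ℤ →+* ℤ[X]) := rfl

lemma coeff_coeff_toBivariate (P : MvPolynomial (Fin 2) ℤ) (m : Fin 2 →₀ ℕ) :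
    ((toBivariate P).coeff (m 0)).coeff (m 1) = P.coeff m := by
  have hm : (Finsupp.single default (m 1)).cons (m 0) = m := by
    ext i
    fin_cases i
    · rfl
    · exact Finsupp.single_eq_same
  rw [toBivariate_apply, coeff_map, RingHom.coe_coe, MvPolynomial.coeff_uniqueAlgEquiv,
    MvPolynomial.finSuccEquiv_coeff_coeff, hm]

lemma natDegree_toBivariate (P : MvPolynomial (Fin 2) ℤ) :
    (toBivariate P).natDegree = P.degreeOf 0 := by
  rw [toBivariate_apply, natDegree_map_eq_of_injective (AlgEquiv.injective _),
    MvPolynomial.natDegree_finSuccEquiv]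

/-- The one-variable polynomial `P(X, y)`. -/
noncomputable def evalY (P : MvPolynomial (Fin 2) ℤ) (y : ℂ) : ℂ[X] :=
  (toBivariate P).map (aeval y : ℤ[X] →ₐ[ℤ] ℂ)

lemma evalBiv_eq_eval_evalY (P : MvPolynomial (Fin 2) ℤ) (x y : ℂ) :
    evalBiv P x y = (evalY P y).eval x := by
  have hhom : MvPolynomial.eval₂Hom (Int.castRingHom ℂ) ![x, y] =
      ((evalRingHom x).comp (mapRingHom (aeval y : ℤ[X] →ₐ[ℤ] ℂ))).comp
        (toBivariate : MvPolynomial (Fin 2) ℤ →+* ℤ[X][X]) := by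
    refine MvPolynomial.ringHom_ext (fun r ↦ by simp) fun i ↦ ?_
    fin_cases i
    · simp [toBivariate_apply, MvPolynomial.finSuccEquiv_X_zero]
    · have hX := MvPolynomial.finSuccEquiv_X_succ (R := ℤ) (n := 1) (j := 0)
      rw [Fin.succ_zero_eq_one] at hX
      simp [toBivariate_apply, hX]
  exact DFunLike.congr_fun hhom P

lemma exists_eval_eq_evalBiv (P : MvPolynomial (Fin 2) ℤ) (x : ℂ) :
    ∃ Q : ℂ[X], ∀ y, evalBiv P x y = Q.eval y := by
  refine ⟨MvPolynomial.aeval ![C x, X] P, fun y ↦ ?_⟩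
  have hhom : MvPolynomial.eval₂Hom (Int.castRingHom ℂ) ![x, y] =
      (evalRingHom y).comp (MvPolynomial.aeval (R := ℤ) ![C x, X]) := by
    refine MvPolynomial.ringHom_ext (fun r ↦ by simp) fun i ↦ ?_
    fin_cases i <;> simp
  exact DFunLike.congr_fun hhom P

lemma evalBiv_rename_swap (P : MvPolynomial (Fin 2) ℤ) (x y : ℂ) :
    evalBiv (MvPolynomial.rename (Equiv.swap 0 1) P) x y = evalBiv P y x := by
  rw [evalBiv, MvPolynomial.eval₂_rename, evalBiv]
  congr 1
  ext i
  fin_cases i <;> simp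

end Bivariate

section Isogeny

variable {N : ℕ}

/-- The adjugate of a matrix of determinant `N`, representing the dual isogeny. -/
def adjugateMatrix (A : FixedDetMatrix (Fin 2) ℤ N) : FixedDetMatrix (Fin 2) ℤ N :=
  ⟨A.1.adjugate, by rw [Matrix.det_adjugate, A.2, Fintype.card_fin, pow_one]⟩

lemma adjugateMatrix_coe (A : FixedDetMatrix (Fin 2) ℤ N) :
    (adjugateMatrix A).1 = !![A.1 1 1, -A.1 0 1; -A.1 1 0, A.1 0 0] := A.1.adjugate_fin_two

lemma IsPrimitive.adjugateMatrix {A : FixedDetMatrix (Fin 2) ℤ N} (hA : IsPrimitive A.1) :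
    IsPrimitive (adjugateMatrix A).1 := fun k hk ↦ hA k <| by
  have h00 := hk 0 0
  have h01 := hk 0 1
  have h10 := hk 1 0
  have h11 := hk 1 1
  simp only [adjugateMatrix_coe, Matrix.of_apply, Matrix.cons_val', Matrix.cons_val_zero,
    Matrix.cons_val_one, Matrix.cons_val_fin_one,
    dvd_neg] at h00 h01 h10 h11
  simp [Fin.forall_fin_two, *]

variable [NeZero N]

lemma exists_jInv_eq_iff {x y : ℂ} :
    (∃ τ : ℂ, 0 < τ.im ∧ ∃ a b c d : ℤ,
      a * d - b * c = (N : ℤ) ∧ Int.gcd (Int.gcd a b) (Int.gcd c d) = 1 ∧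
      x = jInv (((a : ℂ) * τ + b) / ((c : ℂ) * τ + d)) ∧ y = jInv τ) ↔
    ∃ (τ : ℍ) (A : FixedDetMatrix (Fin 2) ℤ N),
      IsPrimitive A.1 ∧ x = kleinJ (toGL A • τ) ∧ y = kleinJ τ := by
  constructor
  · rintro ⟨t, ht, a, b, c, d, hdet, hgcd, rfl, rfl⟩
    let A : FixedDetMatrix (Fin 2) ℤ N := ⟨!![a, b; c, d], by rwa [Matrix.det_fin_two_of]⟩
    exact ⟨⟨t, ht⟩, A, isPrimitive_iff.mpr hgcd,
      (congrArg jInv (coe_toGL_smul A ⟨t, ht⟩).symm).trans (jInv_coe _), jInv_coe ⟨t, ht⟩⟩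
  · rintro ⟨τ, A, hA, rfl, rfl⟩
    rw [Matrix.eta_fin_two A.1, isPrimitive_iff] at hA
    refine ⟨τ, τ.im_pos, A.1 0 0, A.1 0 1, A.1 1 0, A.1 1 1, ?_, hA, ?_, (jInv_coe τ).symm⟩
    · exact (Matrix.det_fin_two A.1).symm.trans A.2
    · rw [← coe_toGL_smul, jInv_coe]

lemma toGL_adjugateMatrix_smul_smul (A : FixedDetMatrix (Fin 2) ℤ N) (τ : ℍ) :
    toGL (adjugateMatrix A) • toGL A • τ = τ := by
  have hdet : (A.1 0 0 * A.1 1 1 - A.1 0 1 * A.1 1 0 : ℂ) = N := by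
    exact_mod_cast (Matrix.det_fin_two A.1).symm.trans A.2
  have hden : (A.1 1 0 * τ + A.1 1 1 : ℂ) ≠ 0 := by
    simpa [denom, toGL_apply] using denom_ne_zero (toGL A) τ
  have hN : (N : ℂ) ≠ 0 := NeZero.ne _
  have hnum : (A.1 1 1 : ℂ) * ((A.1 0 0 * τ + A.1 0 1) / (A.1 1 0 * τ + A.1 1 1)) + -A.1 0 1 =
      N * τ / (A.1 1 0 * τ + A.1 1 1) := by
    rw [← hdet, eq_div_iff hden, add_mul, mul_assoc, div_mul_cancel₀ _ hden]
    ring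
  have hdenom : -(A.1 1 0 : ℂ) * ((A.1 0 0 * τ + A.1 0 1) / (A.1 1 0 * τ + A.1 1 1)) + A.1 0 0 =
      N / (A.1 1 0 * τ + A.1 1 1) := by
    rw [← hdet, eq_div_iff hden, add_mul, mul_assoc, div_mul_cancel₀ _ hden]
    ring
  refine UpperHalfPlane.ext ?_
  rw [coe_toGL_smul, coe_toGL_smul, adjugateMatrix_coe]
  simp only [Matrix.of_apply, Matrix.cons_val', Matrix.cons_val_zero, Matrix.cons_val_one,
    Matrix.cons_val_fin_one, Int.cast_neg]
  rw [hnum, hdenom, div_div_div_cancel_right₀ hden, mul_div_cancel_left₀ _ hN]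

lemma exists_kleinJ_toGL_smul_symm {x y : ℂ}
    (h : ∃ (τ : ℍ) (A : FixedDetMatrix (Fin 2) ℤ N),
      IsPrimitive A.1 ∧ x = kleinJ (toGL A • τ) ∧ y = kleinJ τ) :
    ∃ (τ : ℍ) (A : FixedDetMatrix (Fin 2) ℤ N),
      IsPrimitive A.1 ∧ y = kleinJ (toGL A • τ) ∧ x = kleinJ τ := by
  obtain ⟨τ, A, hA, rfl, rfl⟩ := h
  exact ⟨toGL A • τ, adjugateMatrix A, hA.adjugateMatrix,
    by rw [toGL_adjugateMatrix_smul_smul], rfl⟩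

end Isogeny

section Separation

variable {N : ℕ} {p q : HermiteRep N}

lemma tendsto_nome_gl_smul_div_of_d_lt [NeZero N] (h : q.d < p.d) :
    Tendsto (fun τ ↦ nome (q.gl • τ) / nome (p.gl • τ)) atImInfty (𝓝 0) := by
  have hratio : (p.a / p.d : ℝ) < q.a / q.d := by
    have hp : (0 : ℝ) < p.d := mod_cast p.d_pos
    have hq : (0 : ℝ) < q.d := mod_cast q.d_pos
    have hN : (p.a * p.d : ℝ) = q.a * q.d := mod_cast p.a_mul_d.trans q.a_mul_d.symm
    have ha : (0 : ℝ) < p.a := mod_cast p.a_pos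
    have hlt : (q.d : ℝ) < p.d := mod_cast h
    rw [div_lt_div_iff₀ hp hq]
    refine lt_of_mul_lt_mul_right ?_ hq.le
    calc (p.a * q.d * q.d : ℝ) < p.a * p.d * p.d := by
          rw [mul_assoc, mul_assoc]
          gcongr
      _ = q.a * p.d * q.d := by rw [hN]; ring
  rw [tendsto_zero_iff_norm_tendsto_zero]
  have hnorm (τ : ℍ) : ‖nome (q.gl • τ) / nome (p.gl • τ)‖ =
      Real.exp (-2 * π * (q.a / q.d - p.a / p.d) * τ.im) := by
    rw [norm_div, norm_nome, norm_nome, HermiteRep.im_gl_smul, HermiteRep.im_gl_smul,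
      ← Real.exp_sub]
    ring_nf
  rw [funext hnorm]
  exact Real.tendsto_exp_atBot.comp
    (tendsto_comap.const_mul_atTop_of_neg (by nlinarith [Real.pi_pos]))

lemma nome_gl_smul_div_of_d_eq [NeZero N] (h : q.d = p.d) (τ : ℍ) :
    nome (q.gl • τ) / nome (p.gl • τ) =
      Complex.exp (2 * π * Complex.I * (((q.b : ℂ) - p.b) / p.d)) := by
  have ha : q.a = p.a := by rw [HermiteRep.a, HermiteRep.a, h]
  rw [nome, nome, ← Complex.exp_sub, p.coe_gl_smul, q.coe_gl_smul, h, ha]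
  ring_nf

lemma exp_b_sub_b_div_d_ne_one (h : q.d = p.d) (hpq : p ≠ q) :
    Complex.exp (2 * π * Complex.I * (((q.b : ℂ) - p.b) / p.d)) ≠ 1 := by
  rw [Ne, Complex.exp_eq_one_iff]
  rintro ⟨n, hn⟩
  have hd : (p.d : ℂ) ≠ 0 := mod_cast p.d_pos.ne'
  rw [mul_comm, mul_left_inj' Complex.two_pi_I_ne_zero, div_eq_iff hd] at hn
  have hdvd : (p.d : ℤ) ∣ q.b - p.b := ⟨n, by rw [mul_comm]; exact_mod_cast hn⟩
  have hmod : p.b ≡ q.b [MOD p.d] := (Nat.modEq_iff_dvd).mpr hdvd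
  exact hpq (HermiteRep.ext h.symm (hmod.eq_of_lt_of_lt p.b_lt_d (h ▸ q.b_lt_d)))

lemma exists_tendsto_nome_gl_smul_div [NeZero N] (hle : q.d ≤ p.d) (hpq : p ≠ q) :
    ∃ w ≠ 1, Tendsto (fun τ ↦ nome (q.gl • τ) / nome (p.gl • τ)) atImInfty (𝓝 w) := by
  rcases hle.lt_or_eq with hlt | heq
  · exact ⟨0, zero_ne_one, tendsto_nome_gl_smul_div_of_d_lt hlt⟩
  · exact ⟨_, exp_b_sub_b_div_d_ne_one heq hpq,
      tendsto_const_nhds.congr fun τ ↦ (nome_gl_smul_div_of_d_eq heq τ).symm⟩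

lemma eventually_kleinJ_gl_smul_ne [NeZero N] (hpq : p ≠ q) :
    ∀ᶠ τ in atImInfty, kleinJ (p.gl • τ) ≠ kleinJ (q.gl • τ) := by
  wlog hle : q.d ≤ p.d generalizing p q
  · exact (this hpq.symm (le_of_not_ge hle)).mono fun _ ↦ Ne.symm
  obtain ⟨w, hw, hlim⟩ := exists_tendsto_nome_gl_smul_div hle hpq
  have hdiff := ((tendsto_kleinJ_mul_nome.comp p.tendsto_gl_smul).mul hlim).sub
    (tendsto_kleinJ_mul_nome.comp q.tendsto_gl_smul)
  have hne : 1 * w - 1 ≠ 0 := by rwa [one_mul, sub_ne_zero]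
  filter_upwards [hdiff.eventually_ne hne] with τ hτ heq
  apply hτ
  rw [Function.comp_apply, Function.comp_apply, heq, mul_assoc,
    mul_div_cancel₀ _ (nome_ne_zero _), sub_self]

end Separation

end ModularPolynomial

/-! ### The factorisation of `Φ_N(X, j(τ))` -/

namespace ModularPolynomial

open UpperHalfPlane MatrixGroups Polynomial Filter
open scoped Real ModularForm Topology

lemma eventually_aeval_kleinJ_ne_zero {R : Type*} [CommRing R] [IsDomain R] [Algebra R ℂ]
    [Module.IsTorsionFree R ℂ] {r : R[X]} (hr : r ≠ 0) :
    ∀ᶠ τ in atImInfty, aeval (kleinJ τ) r ≠ 0 := by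
  obtain ⟨B, hB⟩ := (rootSet_finite r ℂ).isBounded.exists_norm_le
  filter_upwards [tendsto_norm_kleinJ.eventually_gt_atTop B] with τ hτ hroot
  exact hτ.not_ge (hB _ (mem_rootSet.mpr ⟨hr, hroot⟩))

lemma eq_of_eventually_eval_kleinJ_eq {p q : ℂ[X]}
    (h : ∀ᶠ τ in atImInfty, p.eval (kleinJ τ) = q.eval (kleinJ τ)) : p = q := by
  by_contra hne
  obtain ⟨τ, heq, hτ⟩ := (h.and (eventually_aeval_kleinJ_ne_zero (sub_ne_zero.mpr hne))).exists
  exact hτ (by rw [coe_aeval_eq_eval, eval_sub, heq, sub_self])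

variable {N : ℕ} [NeZero N]

lemma eventually_injective_kleinJ_gl_smul :
    ∀ᶠ τ in atImInfty, Function.Injective fun p : HermiteRep N ↦ kleinJ (p.gl • τ) := by
  have h : ∀ᶠ τ in atImInfty, ∀ p q : HermiteRep N, p ≠ q →
      kleinJ (p.gl • τ) ≠ kleinJ (q.gl • τ) := by
    simp only [eventually_all]
    exact fun p q hpq ↦ eventually_kleinJ_gl_smul_ne hpq
  exact h.mono fun τ hτ p q ↦ not_imp_not.mp (hτ p q)

end ModularPolynomial

namespace IsModularPolynomial

open ModularPolynomial UpperHalfPlane MatrixGroups Polynomial Filter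
open scoped Real ModularForm Topology

variable {N : ℕ} {P : MvPolynomial (Fin 2) ℤ}

lemma monic_toBivariate (hP : IsModularPolynomial N P) : (toBivariate P).Monic := hP.2.1.map _

lemma irreducible_toBivariate (hP : IsModularPolynomial N P) : Irreducible (toBivariate P) :=
  (MulEquiv.irreducible_iff toBivariate).mpr hP.1

lemma monic_evalY (hP : IsModularPolynomial N P) (y : ℂ) : (evalY P y).Monic :=
  hP.monic_toBivariate.map _

lemma natDegree_evalY (hP : IsModularPolynomial N P) (y : ℂ) :
    (evalY P y).natDegree = (toBivariate P).natDegree :=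
  hP.monic_toBivariate.natDegree_map _

lemma eventually_separable_evalY (hP : IsModularPolynomial N P) :
    ∀ᶠ τ in atImInfty, (evalY P (kleinJ τ)).Separable := by
  obtain ⟨r, hr, a, b, hab⟩ :=
    exists_mul_add_mul_derivative_eq_C hP.monic_toBivariate hP.irreducible_toBivariate
  filter_upwards [eventually_aeval_kleinJ_ne_zero hr] with τ hτ
  let φ : ℤ[X] →+* ℂ := (aeval (kleinJ τ) : ℤ[X] →ₐ[ℤ] ℂ)
  have hmap : a.map φ * evalY P (kleinJ τ) + b.map φ * derivative (evalY P (kleinJ τ)) =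
      C (φ r) := by
    have h := congrArg (Polynomial.map φ) hab
    rw [Polynomial.map_add, Polynomial.map_mul, Polynomial.map_mul, map_C, ← derivative_map] at h
    exact h
  refine ⟨C (φ r)⁻¹ * a.map φ, C (φ r)⁻¹ * b.map φ, ?_⟩
  rw [mul_assoc, mul_assoc, ← mul_add, hmap, ← C_mul, inv_mul_cancel₀ (show φ r ≠ 0 from hτ), C_1]

variable [NeZero N]

lemma evalBiv_eq_zero_iff (hP : IsModularPolynomial N P) {x y : ℂ} : evalBiv P x y = 0 ↔
    ∃ (τ : ℍ) (A : FixedDetMatrix (Fin 2) ℤ N),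
      IsPrimitive A.1 ∧ x = kleinJ (toGL A • τ) ∧ y = kleinJ τ :=
  (hP.2.2.2 x y).trans exists_jInv_eq_iff

lemma evalBiv_kleinJ_eq_zero_iff (hP : IsModularPolynomial N P) (x : ℂ) (τ : ℍ) :
    evalBiv P x (kleinJ τ) = 0 ↔ ∃ p : HermiteRep N, kleinJ (p.gl • τ) = x := by
  rw [hP.evalBiv_eq_zero_iff]
  constructor
  · rintro ⟨τ', A, hA, rfl, hτ⟩
    obtain ⟨σ, p, rfl⟩ := exists_eq_smul_matrix A hA
    obtain ⟨Q, hQ⟩ := exists_prod_sub_kleinJ_eq_eval (N := N) (kleinJ (p.gl • τ'))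
    have hzero : ∏ q : HermiteRep N, (kleinJ (p.gl • τ') - kleinJ (q.gl • τ)) = 0 := by
      rw [hQ, hτ, ← hQ]
      exact Finset.prod_eq_zero (Finset.mem_univ p) (sub_self _)
    obtain ⟨q, -, hq⟩ := Finset.prod_eq_zero_iff.mp hzero
    refine ⟨q, ?_⟩
    rw [toGL_smul, mul_smul, ← sub_eq_zero.mp hq]
    exact (kleinJ_smul σ _).symm
  · rintro ⟨p, rfl⟩
    exact ⟨τ, p.matrix, p.isPrimitive_matrix, rfl, rfl⟩

lemma evalY_eq_prod_of_separable (hP : IsModularPolynomial N P) {τ : ℍ}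
    (hsep : (evalY P (kleinJ τ)).Separable)
    (hinj : Function.Injective fun p : HermiteRep N ↦ kleinJ (p.gl • τ)) :
    evalY P (kleinJ τ) = ∏ p : HermiteRep N, (X - C (kleinJ (p.gl • τ))) := by
  have hroots : (evalY P (kleinJ τ)).roots =
      Finset.univ.val.map fun p : HermiteRep N ↦ kleinJ (p.gl • τ) := by
    refine (Multiset.Nodup.ext (nodup_roots hsep) (Finset.univ.nodup.map hinj)).mpr fun x ↦ ?_
    rw [mem_roots (hP.monic_evalY _).ne_zero, IsRoot.def, ← evalBiv_eq_eval_evalY,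
      hP.evalBiv_kleinJ_eq_zero_iff, Multiset.mem_map]
    simp only [Finset.mem_val, Finset.mem_univ, true_and]
  rw [(IsAlgClosed.splits _).eq_prod_roots_of_monic (hP.monic_evalY _), hroots, Multiset.map_map]
  rfl

lemma evalY_kleinJ (hP : IsModularPolynomial N P) (τ : ℍ) :
    evalY P (kleinJ τ) = ∏ p : HermiteRep N, (X - C (kleinJ (p.gl • τ))) := by
  refine Polynomial.funext fun x ↦ ?_
  obtain ⟨Q₁, hQ₁⟩ := exists_prod_sub_kleinJ_eq_eval (N := N) x
  obtain ⟨Q₂, hQ₂⟩ := exists_eval_eq_evalBiv P x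
  have heval (τ' : ℍ) : (∏ p : HermiteRep N, (X - C (kleinJ (p.gl • τ')))).eval x =
      Q₁.eval (kleinJ τ') := by
    simp only [eval_prod, eval_sub, eval_X, eval_C, hQ₁]
  have hQ : Q₂ = Q₁ := by
    refine eq_of_eventually_eval_kleinJ_eq ?_
    filter_upwards [hP.eventually_separable_evalY, eventually_injective_kleinJ_gl_smul (N := N)]
      with τ' hsep hinj
    rw [← hQ₂, evalBiv_eq_eval_evalY, hP.evalY_eq_prod_of_separable hsep hinj, heval]
  rw [← evalBiv_eq_eval_evalY, hQ₂, hQ, heval]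

lemma natDegree_toBivariate_eq (hP : IsModularPolynomial N P) :
    (toBivariate P).natDegree = dedekindPsi N := by
  rw [← hP.natDegree_evalY (kleinJ I), hP.evalY_kleinJ, natDegree_finsetProd_X_sub_C_eq_card,
    Finset.card_univ, card_hermiteRep]

lemma degreeOf_zero (hP : IsModularPolynomial N P) : P.degreeOf 0 = dedekindPsi N := by
  rw [← natDegree_toBivariate, hP.natDegree_toBivariate_eq]

lemma swap (hP : IsModularPolynomial N P) :
    IsModularPolynomial N (MvPolynomial.rename (Equiv.swap 0 1) P) := by
  refine ⟨(MulEquiv.irreducible_iff (MvPolynomial.renameEquiv ℤ (Equiv.swap 0 1))).mpr hP.1,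
    hP.2.2.1, ?_, fun x y ↦ ?_⟩
  · rw [MvPolynomial.rename_rename, ← Equiv.coe_trans, Equiv.swap_swap, Equiv.coe_refl,
      MvPolynomial.rename_id_apply]
    exact hP.2.1
  · rw [evalBiv_rename_swap, hP.evalBiv_eq_zero_iff, exists_jInv_eq_iff]
    exact ⟨exists_kleinJ_toGL_smul_symm, exists_kleinJ_toGL_smul_symm⟩

lemma degreeOf_one (hP : IsModularPolynomial N P) : P.degreeOf 1 = dedekindPsi N := by
  rw [← hP.swap.degreeOf_zero,
    ← MvPolynomial.degreeOf_rename_of_injective (Equiv.swap (0 : Fin 2) 1).injective 1,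
    Equiv.swap_apply_right]

lemma exists_kleinJ_eq (hP : IsModularPolynomial N P) (y : ℂ) : ∃ τ : ℍ, kleinJ τ = y := by
  have hdeg : (evalY P y).degree ≠ 0 := by
    rw [degree_eq_natDegree (hP.monic_evalY y).ne_zero, hP.natDegree_evalY,
      hP.natDegree_toBivariate_eq]
    exact_mod_cast (dedekindPsi_pos N).ne'
  obtain ⟨x, hx⟩ := IsAlgClosed.exists_root (evalY P y) hdeg
  rw [IsRoot.def, ← evalBiv_eq_eval_evalY, hP.evalBiv_eq_zero_iff] at hx
  obtain ⟨τ, -, -, -, rfl⟩ := hx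
  exact ⟨τ, rfl⟩

end IsModularPolynomial

/-! ### Petersson norms -/

namespace ModularPolynomial

open UpperHalfPlane MatrixGroups Polynomial Filter
open scoped Real ModularForm

/-- The Petersson norm `|Δ(τ)| (Im τ)⁶` of the discriminant. -/
noncomputable def petDisc (τ : ℍ) : ℝ := ‖ModularForm.discriminant τ‖ * τ.im ^ 6

/-- The larger of the Petersson norms of the weight-12 forms `E₄³` and `Δ`. -/
noncomputable def petMax (τ : ℍ) : ℝ :=
  max (‖ModularForm.E₄ τ‖ ^ 3) ‖ModularForm.discriminant τ‖ * τ.im ^ 6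

lemma im_smul_eq_div_norm_denom_sq (σ : SL(2, ℤ)) (τ : ℍ) :
    (σ • τ).im = τ.im / ‖denom σ τ‖ ^ 2 := by
  rw [ModularGroup.im_smul_eq_div_normSq, Complex.normSq_eq_norm_sq]

lemma norm_discriminant_pos (τ : ℍ) : 0 < ‖ModularForm.discriminant τ‖ :=
  norm_pos_iff.mpr (ModularForm.discriminant_ne_zero τ)

lemma petMax_smul (σ : SL(2, ℤ)) (τ : ℍ) : petMax (σ • τ) = petMax τ := by
  have h : ‖denom σ τ‖ ≠ 0 := norm_ne_zero_iff.mpr (denom_ne_zero σ τ)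
  have hmax : max (‖ModularForm.E₄ (σ • τ)‖ ^ 3) ‖ModularForm.discriminant (σ • τ)‖ =
      ‖denom σ τ‖ ^ 12 * max (‖ModularForm.E₄ τ‖ ^ 3) ‖ModularForm.discriminant τ‖ := by
    rw [discriminant_smul, E₄_smul, mul_max_of_nonneg _ _ (by positivity), norm_mul, norm_mul,
      norm_pow, norm_pow, mul_pow, ← pow_mul]
  rw [petMax, petMax, im_smul_eq_div_norm_denom_sq, hmax, div_pow]
  field_simp

lemma petDisc_pos (τ : ℍ) : 0 < petDisc τ :=
  mul_pos (norm_discriminant_pos τ) (pow_pos τ.im_pos 6)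

lemma petDisc_le_petMax (τ : ℍ) : petDisc τ ≤ petMax τ :=
  mul_le_mul_of_nonneg_right (le_max_right _ _) (pow_pos τ.im_pos 6).le

lemma petMax_pos (τ : ℍ) : 0 < petMax τ := (petDisc_pos τ).trans_le (petDisc_le_petMax τ)

lemma log_petDisc (τ : ℍ) :
    Real.log (petDisc τ) = Real.log ‖ModularForm.discriminant τ‖ + 6 * Real.log τ.im := by
  rw [petDisc, Real.log_mul (norm_discriminant_pos τ).ne' (pow_pos τ.im_pos 6).ne', Real.log_pow]
  rfl

lemma log_max_one_norm_kleinJ (τ : ℍ) :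
    Real.log (max 1 ‖kleinJ τ‖) = Real.log (petMax τ) - Real.log (petDisc τ) := by
  rw [← Real.log_div (petMax_pos τ).ne' (petDisc_pos τ).ne', petMax, petDisc,
    mul_div_mul_right _ _ (pow_pos τ.im_pos 6).ne', ← max_div_div_right (norm_nonneg _),
    div_self (norm_discriminant_pos τ).ne', kleinJ, norm_div, norm_pow, max_comm]

section Sums

variable {N : ℕ} [NeZero N]

lemma log_im_gl_smul (p : HermiteRep N) (τ : ℍ) :
    Real.log (p.gl • τ).im = Real.log N + Real.log τ.im - 2 * Real.log p.d := by
  have hd : (p.d : ℝ) ≠ 0 := mod_cast p.d_pos.ne'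
  have ha : (p.a : ℝ) ≠ 0 := mod_cast p.a_pos.ne'
  have hN : Real.log N = Real.log p.a + Real.log p.d := by
    rw [← Real.log_mul ha hd]
    exact_mod_cast congrArg (fun n : ℕ ↦ Real.log n) p.a_mul_d.symm
  rw [p.im_gl_smul, Real.log_mul (div_ne_zero ha hd) τ.im_ne_zero, Real.log_div ha hd, hN]
  ring

lemma sum_log_im_gl_smul (τ : ℍ) :
    ∑ p : HermiteRep N, Real.log (p.gl • τ).im =
      dedekindPsi N * (Real.log τ.im - (Real.log N - 2 * lambdaN N)) := by
  simp only [log_im_gl_smul, Finset.sum_sub_distrib, ← Finset.mul_sum, sum_log_d,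
    Finset.sum_const, Finset.card_univ, card_hermiteRep, nsmul_eq_mul]
  ring

lemma sum_log_petDisc_gl_smul (τ : ℍ) :
    ∑ p : HermiteRep N, Real.log (petDisc (p.gl • τ)) =
      dedekindPsi N * Real.log (petDisc τ) -
        6 * dedekindPsi N * (Real.log N - 2 * lambdaN N) := by
  obtain ⟨c, hc, hprod⟩ := exists_prod_discriminant_eq N
  have hdisc : ∑ p : HermiteRep N, Real.log ‖ModularForm.discriminant (p.gl • τ)‖ =
      dedekindPsi N * Real.log ‖ModularForm.discriminant τ‖ := by
    rw [← Real.log_prod fun p _ ↦ (norm_discriminant_pos _).ne', ← norm_prod, hprod, norm_mul, hc,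
      one_mul, norm_pow, Real.log_pow, card_hermiteRep]
  simp only [log_petDisc, Finset.sum_add_distrib, ← Finset.mul_sum, hdisc, sum_log_im_gl_smul]
  ring

lemma _root_.IsModularPolynomial.log_mahlerMeasure_evalY {P : MvPolynomial (Fin 2) ℤ}
    (hP : IsModularPolynomial N P) (τ : ℍ) :
    Real.log (evalY P (kleinJ τ)).mahlerMeasure =
      6 * dedekindPsi N * (Real.log N - 2 * lambdaN N) - dedekindPsi N * Real.log (petDisc τ) +
        ∑ p : HermiteRep N, Real.log (petMax (p.gl • τ)) := by
  have hprod : (evalY P (kleinJ τ)).mahlerMeasure =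
      ∏ p : HermiteRep N, max 1 ‖kleinJ (p.gl • τ)‖ := by
    rw [hP.evalY_kleinJ, Finset.prod_eq_multiset_prod, prod_mahlerMeasure_eq_mahlerMeasure_prod,
      Multiset.map_map, ← Finset.prod_eq_multiset_prod]
    exact Finset.prod_congr rfl fun p _ ↦ mahlerMeasure_X_sub_C _
  rw [hprod, Real.log_prod fun p _ ↦ (zero_lt_one.trans_le (le_max_left _ _)).ne']
  simp only [log_max_one_norm_kleinJ, Finset.sum_sub_distrib, sum_log_petDisc_gl_smul]
  ring

end Sums

end ModularPolynomial

/-! ### Bounds on the fundamental domain -/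

namespace ModularPolynomial

open UpperHalfPlane MatrixGroups Filter
open scoped Real ModularForm Modular

lemma abs_log_norm_one_sub_le {w : ℂ} (hw : ‖w‖ ≤ 1 / 4) :
    |Real.log ‖1 - w‖| ≤ 3 / 2 * ‖w‖ := by
  have hnonneg := norm_nonneg w
  have hlower : 1 - ‖w‖ ≤ ‖1 - w‖ := by simpa using norm_sub_norm_le (1 : ℂ) w
  have hupper : ‖1 - w‖ ≤ 1 + ‖w‖ := by simpa using norm_sub_le (1 : ℂ) w
  have hpos : 0 < ‖1 - w‖ := by linarith
  have hinv : ‖1 - w‖⁻¹ ≤ 1 + 3 / 2 * ‖w‖ := by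
    rw [inv_le_iff_one_le_mul₀ hpos]
    nlinarith
  exact abs_le.mpr ⟨by linarith [Real.one_sub_inv_le_log_of_pos hpos],
    by linarith [Real.log_le_sub_one_of_pos hpos]⟩

lemma abs_sum_log_norm_one_sub_pow_le {q : ℂ} (hq : ‖q‖ ≤ 1 / 100) (n : ℕ) :
    |∑ k ∈ Finset.range n, Real.log ‖1 - q ^ (k + 2)‖| ≤ 2 * ‖q‖ ^ 2 := by
  have hlt : ‖q‖ < 1 := by linarith
  have hterm (k : ℕ) : |Real.log ‖1 - q ^ (k + 2)‖| ≤ 3 / 2 * ‖q‖ ^ 2 * ‖q‖ ^ k := by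
    have hpow : ‖q ^ (k + 2)‖ ≤ 1 / 4 := by
      rw [norm_pow]
      exact (pow_le_of_le_one (norm_nonneg q) hlt.le (by lia)).trans (by linarith)
    exact (abs_log_norm_one_sub_le hpow).trans_eq (by rw [norm_pow]; ring)
  calc |∑ k ∈ Finset.range n, Real.log ‖1 - q ^ (k + 2)‖|
      ≤ ∑ k ∈ Finset.range n, 3 / 2 * ‖q‖ ^ 2 * ‖q‖ ^ k :=
        (Finset.abs_sum_le_sum_abs _ _).trans (Finset.sum_le_sum fun k _ ↦ hterm k)
    _ ≤ 3 / 2 * ‖q‖ ^ 2 * (1 - ‖q‖)⁻¹ := by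
        rw [← Finset.mul_sum, ← tsum_geometric_of_lt_one (norm_nonneg q) hlt]
        gcongr
        exact (summable_geometric_of_lt_one (norm_nonneg q) hlt).sum_le_tsum _
          fun _ _ ↦ by positivity
    _ ≤ 3 / 2 * ‖q‖ ^ 2 * (4 / 3) := by
        gcongr
        rw [inv_le_comm₀ (by linarith) (by norm_num)]
        linarith
    _ = 2 * ‖q‖ ^ 2 := by ring

lemma abs_log_norm_eulerProd_sub_le {q : ℂ} (hq : ‖q‖ ≤ 1 / 100) (hne : eulerProd q ≠ 0) :
    |Real.log ‖eulerProd q‖ - 24 * Real.log ‖1 - q‖| ≤ 48 * ‖q‖ ^ 2 := by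
  have hlt : ‖q‖ < 1 := by linarith
  have hfactor (k : ℕ) : ‖1 - q ^ (k + 1)‖ ≠ 0 := by
    refine norm_ne_zero_iff.mpr (sub_ne_zero.mpr fun h ↦ ?_)
    exact (pow_lt_one₀ (norm_nonneg q) hlt k.succ_ne_zero).ne (by rw [← norm_pow, ← h, norm_one])
  have hlog (n : ℕ) : Real.log ‖∏ k ∈ Finset.range (n + 1), (1 - q ^ (k + 1)) ^ 24‖ -
      24 * Real.log ‖1 - q‖ = 24 * ∑ k ∈ Finset.range n, Real.log ‖1 - q ^ (k + 2)‖ := by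
    simp only [norm_prod, norm_pow]
    rw [Real.log_prod fun k _ ↦ pow_ne_zero 24 (hfactor k), Finset.sum_range_succ']
    simp only [Real.log_pow, zero_add, pow_one, Finset.mul_sum]
    push_cast
    ring_nf
  have htendsto := (((ModularForm.multipliable_one_sub_pow hlt).pow 24).tendsto_prod_tprod_nat.comp
    (tendsto_add_atTop_nat 1)).norm.log (norm_ne_zero_iff.mpr hne)
  refine le_of_tendsto (htendsto.sub_const (24 * Real.log ‖1 - q‖)).abs (.of_forall fun n ↦ ?_)
  simp only [Function.comp_apply, hlog, abs_mul, Nat.abs_ofNat]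
  linarith [abs_sum_log_norm_one_sub_pow_le hq n]

lemma abs_log_petDisc_sub_le {τ : ℍ} (h : ‖nome τ‖ ≤ 1 / 100) :
    |Real.log (petDisc τ) -
      (-2 * π * τ.im + 24 * Real.log ‖1 - nome τ‖ + 6 * Real.log τ.im)| ≤ 48 * ‖nome τ‖ ^ 2 := by
  convert abs_log_norm_eulerProd_sub_le h (eulerProd_nome_ne_zero τ) using 2
  rw [log_petDisc, discriminant_eq_nome_mul, norm_mul, Real.log_mul
    (norm_ne_zero_iff.mpr (nome_ne_zero τ)) (norm_ne_zero_iff.mpr (eulerProd_nome_ne_zero τ)),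
    norm_nome, Real.log_exp]
  ring

lemma S_smul_ρ : ModularGroup.S • ρ = ModularGroup.T • ρ := by
  refine UpperHalfPlane.ext ?_
  rw [modular_S_smul, modular_T_smul, coe_vadd]
  have := ρ.ne_zero
  field_simp
  push_cast
  linear_combination -ρ_sq

lemma E₄_ρ : ModularForm.E₄ ρ = 0 := by
  have hT := E₄_smul ModularGroup.T ρ
  have hdenom : denom ModularGroup.T ρ = 1 := by
    rw [ModularGroup.denom_apply]
    simp [ModularGroup.T]
  rw [← S_smul_ρ, E₄_smul, ModularGroup.denom_S, hdenom, one_pow, one_mul] at hT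
  have hcube : (ρ : ℂ) ^ 4 = ρ := by linear_combination ((ρ : ℂ) ^ 2 - ρ) * ρ_sq
  rw [hcube] at hT
  have hmul : ((ρ : ℂ) - 1) * ModularForm.E₄ ρ = 0 := by linear_combination hT
  refine (mul_eq_zero.mp hmul).resolve_left fun h ↦ ρ.im_ne_zero ?_
  simpa using congrArg Complex.im h

lemma kleinJ_ρ : kleinJ ρ = 0 := by
  rw [kleinJ, E₄_ρ, zero_pow three_ne_zero, zero_div]

lemma le_pi_mul_sqrt_three : 5.4413 ≤ π * √3 := by
  have hsqrt : 1.73205 ≤ √3 := Real.le_sqrt_of_sq_le (by norm_num)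
  nlinarith [Real.pi_gt_d6]

lemma norm_nome_ρ : ‖nome ρ‖ = Real.exp (-(π * √3)) := by
  rw [norm_nome]
  exact congrArg Real.exp (show -2 * π * (√3 / 2) = _ by ring)

lemma norm_nome_ρ_le : ‖nome ρ‖ ≤ 0.00434 := by
  have hexp : (0.00434 : ℝ)⁻¹ ≤ Real.exp 5.4413 :=
    calc (0.00434 : ℝ)⁻¹
        ≤ 2.7182818283 ^ 5 * ∑ m ∈ Finset.range 6, (0.4413 : ℝ) ^ m / m.factorial := by
          norm_num [Finset.sum_range_succ, Nat.factorial]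
      _ ≤ Real.exp 1 ^ 5 * Real.exp 0.4413 := by
          gcongr
          · exact Real.exp_one_gt_d9.le
          · exact Real.sum_le_exp_of_nonneg (by norm_num) 6
      _ = Real.exp 5.4413 := by
          rw [← Real.exp_nat_mul, ← Real.exp_add]
          norm_num
  rw [norm_nome_ρ, Real.exp_neg, inv_le_comm₀ (by positivity) (by norm_num)]
  exact hexp.trans (Real.exp_le_exp.mpr le_pi_mul_sqrt_three)

lemma sqrt_three_div_two_le_im {τ : ℍ} (h : τ ∈ 𝒟) : √3 / 2 ≤ τ.im := by
  have hsqrt : √3 ≤ 2 * τ.im :=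
    (Real.sqrt_le_left (by linarith [τ.im_pos])).mpr
      (by linarith [ModularGroup.three_le_four_mul_im_sq_of_mem_fd h])
  linarith

lemma norm_nome_le_norm_nome_ρ {τ : ℍ} (h : τ ∈ 𝒟) : ‖nome τ‖ ≤ ‖nome ρ‖ := by
  rw [norm_nome_ρ, norm_nome, Real.exp_le_exp]
  nlinarith [sqrt_three_div_two_le_im h, Real.pi_pos]

lemma norm_E₄_sub_le_of_mem_fd {τ : ℍ} (h : τ ∈ 𝒟) :
    ‖ModularForm.E₄ τ - (1 + 240 * nome τ)‖ ≤ 0.0415 := by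
  have hnome := (norm_nome_le_norm_nome_ρ h).trans norm_nome_ρ_le
  have hbound := norm_E₄_sub_one_sub_le (q := nome τ) (by linarith)
  rw [E₄_nome, sub_sub] at hbound
  refine hbound.trans ?_
  rw [div_le_iff₀ (by linarith)]
  nlinarith [norm_nonneg (nome τ)]

lemma log_petDisc_ρ_le :
    Real.log (petDisc ρ) ≤ -(π * √3) + 24 * Real.log (1 + ‖nome ρ‖) +
      6 * Real.log (√3 / 2) + 48 * ‖nome ρ‖ ^ 2 := by
  have hlog := (abs_le.mp (abs_log_petDisc_sub_le (τ := ρ) (by linarith [norm_nome_ρ_le]))).2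
  have him : ρ.im = √3 / 2 := rfl
  have hpos : 0 < ‖1 - nome ρ‖ := by
    have := norm_sub_norm_le (1 : ℂ) (nome ρ)
    rw [norm_one] at this
    linarith [norm_nome_ρ_le]
  have hle := Real.log_le_log hpos (by simpa using norm_sub_le (1 : ℂ) (nome ρ))
  rw [him] at hlog
  linarith

lemma le_log_petMax_of_le {z : ℍ} (hz : z ∈ 𝒟) (h : 0.209 ≤ ‖1 + 240 * nome z‖) :
    Real.log (petDisc ρ) - 0.027 ≤ Real.log (petMax z) := by
  have hE₄ : 0.1675 ≤ ‖ModularForm.E₄ z‖ := by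
    have := norm_sub_norm_le (1 + 240 * nome z) (ModularForm.E₄ z)
    rw [norm_sub_rev] at this
    linarith [norm_E₄_sub_le_of_mem_fd hz]
  have hmax : 0.1675 ^ 3 * (√3 / 2) ^ 6 ≤ petMax z := by
    have hy := sqrt_three_div_two_le_im hz
    rw [petMax]
    gcongr
    exact (pow_le_pow_left₀ (by norm_num) hE₄ 3).trans (le_max_left _ _)
  have hlogmax := Real.log_le_log (by positivity) hmax
  rw [Real.log_mul (by norm_num) (by positivity), Real.log_pow, Real.log_pow] at hlogmax
  have hlogE₄ : -1.787 ≤ Real.log 0.1675 := by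
    rw [Real.le_log_iff_exp_le (by norm_num), Real.exp_neg,
      inv_le_comm₀ (by positivity) (by norm_num)]
    calc (0.1675 : ℝ)⁻¹
        ≤ 2.7182818283 * ∑ m ∈ Finset.range 8, (0.787 : ℝ) ^ m / m.factorial := by
          norm_num [Finset.sum_range_succ, Nat.factorial]
      _ ≤ Real.exp 1 * Real.exp 0.787 := by
          gcongr
          · exact Real.exp_one_gt_d9.le
          · exact Real.sum_le_exp_of_nonneg (by norm_num) 8
      _ = Real.exp 1.787 := by rw [← Real.exp_add]; norm_num
  have hlog : Real.log (1 + ‖nome ρ‖) ≤ ‖nome ρ‖ := by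
    linarith [Real.log_le_sub_one_of_pos (show 0 < 1 + ‖nome ρ‖ by positivity)]
  push_cast at hlogmax
  nlinarith [norm_nome_ρ_le, log_petDisc_ρ_le, le_pi_mul_sqrt_three, norm_nonneg (nome ρ)]

lemma im_le_of_norm_lt {z : ℍ} (h : ‖1 + 240 * nome z‖ < 0.209) : z.im ≤ 3 / π := by
  have hnome : 0.791 / 240 ≤ ‖nome z‖ := by
    have := norm_sub_norm_le (1 : ℂ) (-(240 * nome z))
    rw [sub_neg_eq_add, norm_neg, norm_mul, norm_one, Complex.norm_ofNat] at this
    linarith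
  have hexp : Real.exp (-6) < Real.exp (-2 * π * z.im) :=
    calc Real.exp (-6) = (Real.exp 1 ^ 6)⁻¹ := by rw [← Real.exp_nat_mul, Real.exp_neg]; norm_num
      _ ≤ (2.7 ^ 6)⁻¹ := by
        gcongr
        linarith [Real.exp_one_gt_d9]
      _ < 0.791 / 240 := by norm_num
      _ ≤ Real.exp (-2 * π * z.im) := hnome.trans_eq (norm_nome z)
  rw [le_div_iff₀ Real.pi_pos]
  linarith [Real.exp_lt_exp.mp hexp]

lemma six_mul_log_sub_le {y₀ y : ℝ} (hy₀ : 0 < y₀) (hle : y₀ ≤ y) (hy : y ≤ 3 / π) :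
    6 * Real.log y₀ - 2 * π * y₀ ≤ 6 * Real.log y - 2 * π * y := by
  have hy_pos : 0 < y := hy₀.trans_le hle
  have hlog : Real.log y₀ - Real.log y ≤ y₀ / y - 1 := by
    rw [← Real.log_div hy₀.ne' hy_pos.ne']
    exact Real.log_le_sub_one_of_pos (div_pos hy₀ hy_pos)
  have hslope : 2 * π * (y - y₀) ≤ 6 * (1 - y₀ / y) :=
    calc 2 * π * (y - y₀)
        ≤ 2 * (3 / y) * (y - y₀) := by
          have := (le_div_comm₀ hy_pos Real.pi_pos).mp hy
          gcongr
      _ = 6 * (1 - y₀ / y) := by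
          field_simp
          ring
  linarith

lemma le_log_petMax_of_lt {z : ℍ} (hz : z ∈ 𝒟) (h : ‖1 + 240 * nome z‖ < 0.209) :
    Real.log (petDisc ρ) - 0.027 ≤ Real.log (petMax z) := by
  have hre : (nome z).re ≤ -0.00329 := by
    have := (Complex.re_le_norm (1 + 240 * nome z)).trans_lt h
    rw [Complex.add_re, Complex.one_re, Complex.mul_re, Complex.re_ofNat,
      Complex.im_ofNat, zero_mul, sub_zero] at this
    linarith
  have hlog_one_sub : Real.log 1.00329 ≤ Real.log ‖1 - nome z‖ := by
    refine Real.log_le_log (by norm_num) (le_trans ?_ (Complex.re_le_norm _))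
    rw [Complex.sub_re, Complex.one_re]
    linarith
  have hlog_quot : Real.log (1 + ‖nome ρ‖) - Real.log 1.00329 ≤ 0.001048 := by
    rw [← Real.log_div (by positivity) (by norm_num)]
    refine (Real.log_le_sub_one_of_pos (by positivity)).trans ?_
    rw [sub_le_iff_le_add, div_le_iff₀ (by norm_num)]
    linarith [norm_nome_ρ_le]
  have hlog_im := six_mul_log_sub_le (by positivity) (sqrt_three_div_two_le_im hz)
    (im_le_of_norm_lt h)
  have hsq_ρ : ‖nome ρ‖ ^ 2 ≤ 0.00434 ^ 2 :=
    pow_le_pow_left₀ (norm_nonneg _) norm_nome_ρ_le 2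
  have hsq_z : ‖nome z‖ ^ 2 ≤ 0.00434 ^ 2 :=
    pow_le_pow_left₀ (norm_nonneg _) ((norm_nome_le_norm_nome_ρ hz).trans norm_nome_ρ_le) 2
  have hlog_z := (abs_le.mp (abs_log_petDisc_sub_le (τ := z)
    (by linarith [norm_nome_le_norm_nome_ρ hz, norm_nome_ρ_le]))).1
  linarith [log_petDisc_ρ_le, Real.log_le_log (petDisc_pos z) (petDisc_le_petMax z)]

lemma le_log_petMax (z : ℍ) : Real.log (petDisc ρ) - 0.027 ≤ Real.log (petMax z) := by
  obtain ⟨σ, hσ⟩ := ModularGroup.exists_smul_mem_fd z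
  rw [← petMax_smul σ z]
  -- If `E₄ ≈ 1 + 240 q` is small, then `Re q < 0` makes `|1 - q|²⁴`, and hence `|Δ|`, large.
  rcases le_or_gt 0.209 ‖1 + 240 * nome (σ • z)‖ with h | h
  · exact le_log_petMax_of_le hσ h
  · exact le_log_petMax_of_lt hσ h

end ModularPolynomial

/-! ### The lower bound -/

namespace ModularPolynomial

open UpperHalfPlane MatrixGroups Polynomial

lemma lt_dedekindPsi {N : ℕ} (hN : 2 ≤ N) : N < dedekindPsi N := by
  have hpos : (0 : ℝ) < N := mod_cast zero_lt_two.trans_le hN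
  have hprod : ∏ _p ∈ N.primeFactors, (1 : ℝ) < ∏ p ∈ N.primeFactors, (1 + 1 / (p : ℝ)) := by
    refine Finset.prod_lt_prod_of_nonempty (fun _ _ ↦ one_pos) (fun p hp ↦ ?_)
      (Nat.nonempty_primeFactors.mpr hN)
    have := (Nat.prime_of_mem_primeFactors hp).pos
    simpa
  have : (N : ℝ) < dedekindPsi N := by
    rw [dedekindPsi_eq]
    exact lt_mul_of_one_lt_right hpos (by simpa using hprod)
  exact_mod_cast this

lemma norm_coeff_le_exp_polyHeight (P : MvPolynomial (Fin 2) ℤ) (m : Fin 2 →₀ ℕ) :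
    ‖P.coeff m‖ ≤ Real.exp (polyHeight P) := by
  rcases eq_or_ne (P.coeff m) 0 with hm | hm
  · rw [hm, norm_zero]
    positivity
  · have hle : (P.coeff m).natAbs ≤ P.support.sup fun m ↦ (P.coeff m).natAbs :=
      Finset.le_sup (f := fun m ↦ (P.coeff m).natAbs) (MvPolynomial.mem_support_iff.mpr hm)
    rw [polyHeight, Real.exp_log (mod_cast (Int.natAbs_pos.mpr hm).trans_le hle), Int.norm_eq_abs,
      ← Int.cast_abs, ← Nat.cast_natAbs]
    exact_mod_cast hle

lemma polyHeight_le_of_norm_coeff_le {P : MvPolynomial (Fin 2) ℤ} {B : ℝ} (hB : 0 ≤ B)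
    (h : ∀ m, ‖P.coeff m‖ ≤ Real.exp B) : polyHeight P ≤ B := by
  rcases (Nat.zero_le (P.support.sup fun m ↦ (P.coeff m).natAbs)).eq_or_lt with h0 | hpos
  · rwa [polyHeight, ← h0, Nat.cast_zero, Real.log_zero]
  · have hne : P.support.Nonempty := by
      by_contra hemp
      rw [Finset.not_nonempty_iff_eq_empty.mp hemp] at hpos
      exact hpos.ne rfl
    obtain ⟨m, -, hm⟩ := Finset.exists_mem_eq_sup P.support hne fun m ↦ (P.coeff m).natAbs
    rw [polyHeight, Real.log_le_iff_le_exp (mod_cast hpos), hm, Nat.cast_natAbs, Int.cast_abs]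
    exact h m

lemma sq_mahlerMeasure_le {p : ℂ[X]} (hp : p.Monic) {H : ℝ} (hcoeff : ∀ i, ‖p.coeff i‖ ≤ H) :
    p.mahlerMeasure ^ 2 ≤ 1 + p.natDegree * H ^ 2 := by
  have hlandau := p.mahlerMeasure_le_sqrt_sum_sq_norm_coeff
  rw [Real.le_sqrt p.mahlerMeasure_nonneg (by positivity)] at hlandau
  calc p.mahlerMeasure ^ 2
      ≤ ∑ i ∈ p.support, ‖p.coeff i‖ ^ 2 := hlandau
    _ ≤ ∑ i ∈ Finset.range (p.natDegree + 1), ‖p.coeff i‖ ^ 2 :=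
        Finset.sum_le_sum_of_subset_of_nonneg supp_subset_range_natDegree_succ
          fun _ _ _ ↦ by positivity
    _ = 1 + ∑ i ∈ Finset.range p.natDegree, ‖p.coeff i‖ ^ 2 := by
        rw [Finset.sum_range_succ, hp.coeff_natDegree, norm_one, one_pow, add_comm]
    _ ≤ 1 + ∑ _i ∈ Finset.range p.natDegree, H ^ 2 := by
        gcongr
        exact hcoeff _
    _ = 1 + p.natDegree * H ^ 2 := by simp

lemma norm_coeff_evalY_zero_le (P : MvPolynomial (Fin 2) ℤ) (i : ℕ) :
    ‖(evalY P 0).coeff i‖ ≤ Real.exp (polyHeight P) := by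
  have hcoeff : (evalY P 0).coeff i = P.coeff (Finsupp.single 0 i) := by
    rw [← coeff_coeff_toBivariate, evalY, coeff_map, RingHom.coe_coe, ← coeff_zero_eq_aeval_zero']
    simp
  rw [hcoeff, Complex.norm_intCast]
  exact norm_coeff_le_exp_polyHeight P _

lemma log_le_of_sq_le_one_add {D M h : ℝ} (hD : 3 ≤ D) (hM : 4 ≤ Real.log M)
    (hle : M ^ 2 ≤ 1 + D * Real.exp h ^ 2) : Real.log M ≤ h + 0.1836 * D := by
  have hM_ne : M ≠ 0 := by
    rintro rfl
    norm_num at hM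
  have hM_sq : 1000 ≤ M ^ 2 :=
    calc (1000 : ℝ) ≤ 2.7 ^ 8 := by norm_num
      _ ≤ Real.exp 1 ^ 8 := by
        gcongr
        linarith [Real.exp_one_gt_d9]
      _ ≤ M ^ 2 := by
        rw [← Real.exp_nat_mul, ← Real.le_log_iff_exp_le (by positivity), Real.log_pow]
        push_cast
        linarith
  have hlog : Real.log (0.999 * M ^ 2) ≤ Real.log (D * Real.exp h ^ 2) :=
    Real.log_le_log (by positivity) (by linarith)
  rw [Real.log_mul (by norm_num) (by positivity), Real.log_mul (by positivity) (by positivity),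
    Real.log_pow, Real.log_pow, Real.log_exp] at hlog
  have hlogD : Real.log D ≤ Real.log 3 + (D / 3 - 1) := by
    rw [← sub_le_iff_le_add', ← Real.log_div (by positivity) (by norm_num)]
    exact Real.log_le_sub_one_of_pos (by positivity)
  have := Real.one_sub_inv_le_log_of_pos (show (0 : ℝ) < 0.999 by norm_num)
  push_cast at hlog
  linarith [Real.log_three_lt_d9]

lemma _root_.IsModularPolynomial.le_polyHeight {N : ℕ} {P : MvPolynomial (Fin 2) ℤ} (hN : 2 ≤ N)
    (hP : IsModularPolynomial N P) :
    6 * dedekindPsi N * (Real.log N - 2 * lambdaN N - 0.0351) ≤ polyHeight P := by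
  have : NeZero N := ⟨by lia⟩
  have hD : (3 : ℝ) ≤ dedekindPsi N := mod_cast hN.trans_lt (lt_dedekindPsi hN)
  have hpetMax : dedekindPsi N * (Real.log (petDisc ρ) - 0.027) ≤
      ∑ p : HermiteRep N, Real.log (petMax (p.gl • ρ)) := by
    rw [← card_hermiteRep, ← nsmul_eq_mul]
    exact Finset.card_nsmul_le_sum _ _ _ fun p _ ↦ le_log_petMax _
  have hmahler := hP.log_mahlerMeasure_evalY ρ
  rw [kleinJ_ρ] at hmahler
  have hlogN : Real.log 2 / 3 ≤ Real.log N - 2 * lambdaN N := by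
    have : Real.log 2 ≤ Real.log N := Real.log_le_log two_pos (mod_cast hN)
    linarith [lambdaN_le N]
  have hM : 4 ≤ Real.log (evalY P 0).mahlerMeasure := by
    nlinarith [Real.log_two_gt_d9]
  have hlandau := sq_mahlerMeasure_le (hP.monic_evalY 0) (norm_coeff_evalY_zero_le P)
  rw [hP.natDegree_evalY, hP.natDegree_toBivariate_eq] at hlandau
  -- `0.027 + 0.1836 = 6 * 0.0351`
  linarith [log_le_of_sq_le_one_add hD hM hlandau]

end ModularPolynomial

/-! ### Bottom rows in reduction theory -/

namespace ModularPolynomial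

open UpperHalfPlane MatrixGroups Matrix.SpecialLinearGroup
open scoped Modular

variable {N : ℕ}

lemma HermiteRep.d_eq_of_bottom_row_eq {p : HermiteRep N} {σ : SL(2, ℤ)} {m : ℕ}
    (h₀ : (σ • p.matrix).1 1 0 = 0) (h₁ : (σ • p.matrix).1 1 1 = m) : p.d = m := by
  rw [FixedDetMatrices.smul_coe, Matrix.mul_apply, Fin.sum_univ_two] at h₀ h₁
  have hc : σ 1 0 = 0 := by
    have : σ 1 0 = 0 ∨ p.a = 0 := by simpa [matrix] using h₀
    exact this.resolve_right p.a_pos.ne'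
  have hd : σ 1 1 * p.d = m := by simpa [matrix, hc] using h₁
  have hdet : σ 0 0 * σ 1 1 = 1 := by
    simpa only [Matrix.det_fin_two, hc, mul_zero, sub_zero] using σ.det_coe
  have habs : (σ 1 1).natAbs = 1 := Int.isUnit_iff_natAbs_eq.mp (.of_mul_eq_one_right _ hdet)
  simpa only [Int.natAbs_mul, habs, one_mul, Int.natAbs_natCast] using congrArg Int.natAbs hd

lemma exists_perm_d_eq_of_bottom_row_eq [NeZero N] {v : ℤ × ℤ} (hv : IsCoprime v.1 v.2) :
    ∃ e : Equiv.Perm (HermiteRep N), ∀ (p : HermiteRep N) (s : SL(2, ℤ)) (m : ℕ),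
      (s • p.matrix).1 1 0 = m * v.1 → (s • p.matrix).1 1 1 = m * v.2 → (e p).d = m := by
  obtain ⟨σ, -, hσ⟩ := ModularGroup.bottom_row_surj (R := ℤ) (a := ![v.1, v.2]) (by simpa using hv)
  have hσ₀ : σ 1 0 = v.1 := congrFun hσ 0
  have hσ₁ : σ 1 1 = v.2 := congrFun hσ 1
  have hdet := σ.det_coe
  rw [Matrix.det_fin_two, hσ₀, hσ₁] at hdet
  obtain ⟨e, he⟩ := exists_perm_rightMul_matrix (N := N) σ⁻¹
  refine ⟨e, fun p s m h₀ h₁ ↦ ?_⟩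
  obtain ⟨t, ht⟩ := he p
  have hrow (j : Fin 2) : ((s * t) • (e p).matrix).1 1 j =
      m * v.1 * σ⁻¹.1 0 j + m * v.2 * σ⁻¹.1 1 j := by
    rw [mul_smul, ← ht, ← rightMul_smul]
    change ((s • p.matrix).1 * σ⁻¹.1) 1 j = _
    rw [Matrix.mul_apply, Fin.sum_univ_two, h₀, h₁]
  refine HermiteRep.d_eq_of_bottom_row_eq (σ := s * t) ?_ ?_
  · rw [hrow, SL2_inv_expl]
    simp only [hσ₁, hσ₀, Matrix.cons_val', Matrix.cons_val_zero, Matrix.cons_val_fin_one,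
      Matrix.cons_val_one, mul_neg]
    ring
  · rw [hrow, SL2_inv_expl]
    simp only [hσ₁, hσ₀, Matrix.cons_val', Matrix.cons_val_zero, Matrix.cons_val_fin_one,
      Matrix.cons_val_one, mul_neg]
    linear_combination (m : ℤ) * hdet

lemma im_toGL_smul [NeZero N] (A : FixedDetMatrix (Fin 2) ℤ N) (τ : ℍ) :
    (toGL A • τ).im = N * τ.im / ‖(A.1 1 0 * τ + A.1 1 1 : ℂ)‖ ^ 2 := by
  rw [im_smul_eq_div_normSq, det_toGL, Nat.abs_cast, Complex.normSq_eq_norm_sq, denom]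
  simp only [toGL_apply, Complex.ofReal_intCast]

lemma norm_sq_le_two_mul_of_mem_fd {τ : ℍ} (hτ : τ ∈ 𝒟) (v : ℤ × ℤ) :
    ‖v‖ ^ 2 ≤ 2 * ‖(v.1 * τ + v.2 : ℂ)‖ ^ 2 := by
  obtain ⟨hnorm, hre⟩ := hτ
  have hform : ‖(v.1 * τ + v.2 : ℂ)‖ ^ 2 =
      (v.1 : ℝ) ^ 2 * Complex.normSq τ + 2 * (v.1 * v.2 * τ.re) + (v.2 : ℝ) ^ 2 := by
    rw [← Complex.normSq_eq_norm_sq, Complex.normSq_apply, Complex.normSq_apply]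
    simp only [Complex.add_re, Complex.mul_re, Complex.intCast_re, coe_re, Complex.intCast_im,
      coe_im, zero_mul, sub_zero, Complex.add_im, Complex.mul_im, add_zero]
    ring
  have hcross : |(v.1 : ℝ) * v.2 * τ.re| ≤ |(v.1 : ℝ)| * |(v.2 : ℝ)| * (1 / 2) := by
    rw [abs_mul, abs_mul]
    gcongr
  have hsq := mul_le_mul_of_nonneg_left hnorm (sq_nonneg (v.1 : ℝ))
  have hlower : |(v.1 : ℝ)| ^ 2 - |(v.1 : ℝ)| * |(v.2 : ℝ)| + |(v.2 : ℝ)| ^ 2 ≤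
      ‖(v.1 * τ + v.2 : ℂ)‖ ^ 2 := by
    rw [hform, sq_abs, sq_abs]
    linarith [(abs_le.mp hcross).1]
  rw [Prod.norm_def, Int.norm_eq_abs, Int.norm_eq_abs]
  rcases max_choice |(v.1 : ℝ)| |(v.2 : ℝ)| with h | h <;> rw [h] <;>
    nlinarith [sq_nonneg (|(v.1 : ℝ)| - 2 * |(v.2 : ℝ)|),
      sq_nonneg (2 * |(v.1 : ℝ)| - |(v.2 : ℝ)|)]

lemma norm_bottom_row_mul_sqrt_im_le [NeZero N] {τ : ℍ} (hτ : τ ∈ 𝒟) (him : τ.im ≤ 1)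
    (A : FixedDetMatrix (Fin 2) ℤ N) :
    ‖(A.1 1 0, A.1 1 1)‖ * √(toGL A • τ).im ≤ √(2 * N) := by
  have hpos := (toGL A • τ).im_pos
  have hden : ‖(A.1 1 0 * τ + A.1 1 1 : ℂ)‖ ≠ 0 := fun h ↦ by
    rw [im_toGL_smul, h] at hpos
    simp at hpos
  refine Real.le_sqrt_of_sq_le ?_
  rw [mul_pow, Real.sq_sqrt hpos.le]
  calc ‖(A.1 1 0, A.1 1 1)‖ ^ 2 * (toGL A • τ).im
    _ ≤ 2 * ‖(A.1 1 0 * τ + A.1 1 1 : ℂ)‖ ^ 2 * (toGL A • τ).im := by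
      gcongr
      exact norm_sq_le_two_mul_of_mem_fd hτ (A.1 1 0, A.1 1 1)
    _ = 2 * N * τ.im := by
      rw [im_toGL_smul]
      field_simp
    _ ≤ 2 * N := mul_le_of_le_one_right (by positivity) him

lemma norm_bottom_row_le [NeZero N] {τ : ℍ} (hτ : τ ∈ 𝒟) (him : τ.im ≤ 1)
    {A : FixedDetMatrix (Fin 2) ℤ N} (hA : toGL A • τ ∈ 𝒟) :
    ‖(A.1 1 0, A.1 1 1)‖ ≤ 2 * √N := by
  have hrow := norm_bottom_row_mul_sqrt_im_le hτ him A
  have hthree := ModularGroup.three_le_four_mul_im_sq_of_mem_fd hA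
  have hhalf : √(1 / 2) ≤ √(toGL A • τ).im :=
    Real.sqrt_le_sqrt (by nlinarith [(toGL A • τ).im_pos])
  have hmul : ‖(A.1 1 0, A.1 1 1)‖ * √(1 / 2) ≤ 2 * √N * √(1 / 2) := by
    calc _ ≤ _ := (mul_le_mul_of_nonneg_left hhalf (norm_nonneg _)).trans hrow
      _ = √(2 ^ 2 * N * (1 / 2)) := by ring_nf
      _ = _ := by
        rw [Real.sqrt_mul (by positivity), Real.sqrt_mul (by positivity),
          Real.sqrt_sq zero_le_two]
  exact le_of_mul_le_mul_right hmul (by positivity)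

lemma exists_bottom_row_eq_mul [NeZero N] (A : FixedDetMatrix (Fin 2) ℤ N) :
    ∃ (m : ℕ) (v : ℤ × ℤ), IsCoprime v.1 v.2 ∧ A.1 1 0 = m * v.1 ∧ A.1 1 1 = m * v.2 := by
  have hgcd : 0 < Int.gcd (A.1 1 0) (A.1 1 1) := Int.gcd_pos_iff.mpr <| by
    by_contra! h
    have hdet := A.2
    rw [Matrix.det_fin_two, h.1, h.2, mul_zero, mul_zero, sub_zero] at hdet
    exact NeZero.ne N (mod_cast hdet.symm)
  obtain ⟨a, b, hab, ha, hb⟩ := Int.exists_gcd_one hgcd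
  exact ⟨_, (a, b), Int.isCoprime_iff_gcd_eq_one.mpr hab, ha.trans (mul_comm _ _),
    hb.trans (mul_comm _ _)⟩

lemma exists_bottom_row_eq_d_smul [NeZero N] (s : HermiteRep N → SL(2, ℤ)) :
    ∃ (q : HermiteRep N → HermiteRep N) (v : HermiteRep N → ℤ × ℤ), (∀ p, v p ≠ 0) ∧
      Function.Injective (fun p ↦ (q p, v p)) ∧
      ∀ p, ((s p • p.matrix).1 1 0, (s p • p.matrix).1 1 1) = (q p).d • v p := by
  choose m v hv h₀ h₁ using fun p ↦ exists_bottom_row_eq_mul (s p • p.matrix)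
  choose e he using fun (v : ℤ × ℤ) (hv : IsCoprime v.1 v.2) ↦
    exists_perm_d_eq_of_bottom_row_eq (N := N) hv
  refine ⟨fun p ↦ e (v p) (hv p) p, v, fun p hp ↦ ?_, fun p p' h ↦ ?_, fun p ↦ ?_⟩
  · have := hv p
    simp [hp, isCoprime_zero_left] at this
  · obtain ⟨hq, hvv⟩ := Prod.mk.inj h
    simp only [hvv] at hq
    exact (e _ _).injective hq
  · rw [he (v p) (hv p) p (s p) (m p) (h₀ p) (h₁ p), h₀, h₁]
    exact Prod.ext (nsmul_eq_mul _ _).symm (nsmul_eq_mul _ _).symm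

lemma sum_inv_norm_le {T : Finset (ℤ × ℤ)} {x : ℝ} (hx : 0 ≤ x) (h₀ : ∀ v ∈ T, v ≠ 0)
    (hT : ∀ v ∈ T, ‖v‖ ≤ x) : ∑ v ∈ T, ‖v‖⁻¹ ≤ 8 * x := by
  have hnorm (v : ℤ × ℤ) : ‖v‖ = (max v.1.natAbs v.2.natAbs : ℕ) := by
    simp [Prod.norm_def, Int.norm_eq_abs]
  have hmaps : ∀ v ∈ T, max v.1.natAbs v.2.natAbs ∈ Finset.Icc 1 ⌊x⌋₊ := fun v hv ↦ by
    rw [Finset.mem_Icc, Nat.one_le_iff_ne_zero, ← Nat.cast_ne_zero (R := ℝ), ← hnorm]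
    exact ⟨norm_ne_zero_iff.mpr (h₀ v hv), Nat.le_floor (hnorm v ▸ hT v hv)⟩
  have hbox : ∀ k ∈ Finset.Icc 1 ⌊x⌋₊,
      ∑ v ∈ T with max v.1.natAbs v.2.natAbs = k, ‖v‖⁻¹ ≤ 8 := fun k hk ↦ by
    have hk₀ : k ≠ 0 := Nat.one_le_iff_ne_zero.mp (Finset.mem_Icc.mp hk).1
    calc ∑ v ∈ T with max v.1.natAbs v.2.natAbs = k, ‖v‖⁻¹
      _ ≤ ∑ v ∈ Finset.box k, ‖v‖⁻¹ := Finset.sum_le_sum_of_subset_of_nonneg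
        (fun _ hv ↦ Int.mem_box.mpr (Finset.mem_filter.mp hv).2) fun _ _ _ ↦ by positivity
      _ = ∑ _v ∈ (Finset.box k : Finset (ℤ × ℤ)), (k : ℝ)⁻¹ :=
        Finset.sum_congr rfl fun v hv ↦ by rw [hnorm, Int.mem_box.mp hv]
      _ = 8 := by
        rw [Finset.sum_const, Int.card_box hk₀, nsmul_eq_mul]
        push_cast
        field_simp
  calc ∑ v ∈ T, ‖v‖⁻¹
    _ = ∑ k ∈ Finset.Icc 1 ⌊x⌋₊, ∑ v ∈ T with max v.1.natAbs v.2.natAbs = k, ‖v‖⁻¹ :=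
      (Finset.sum_fiberwise_of_maps_to hmaps _).symm
    _ ≤ ∑ k ∈ Finset.Icc 1 ⌊x⌋₊, 8 := Finset.sum_le_sum hbox
    _ = 8 * ⌊x⌋₊ := by simp [mul_comm]
    _ ≤ 8 * x := by gcongr; exact Nat.floor_le hx

lemma sum_sqrt_im_le [NeZero N] {τ : ℍ} (hτ : τ ∈ 𝒟) (him : τ.im ≤ 1)
    {s : HermiteRep N → SL(2, ℤ)} (hs : ∀ p, s p • p.gl • τ ∈ 𝒟) :
    ∑ p, √(s p • p.gl • τ).im ≤ 16 * √2 * dedekindPsi N := by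
  have hsmul (p : HermiteRep N) : s p • p.gl • τ = toGL (s p • p.matrix) • τ := by
    rw [toGL_smul, mul_smul]
    rfl
  obtain ⟨q, v, hv, hinj, hrow⟩ := exists_bottom_row_eq_d_smul s
  have hnorm (p : HermiteRep N) :
      ‖((s p • p.matrix).1 1 0, (s p • p.matrix).1 1 1)‖ = (q p).d * ‖v p‖ := by
    rw [hrow, ← natCast_zsmul, norm_smul, Int.norm_natCast]
  have hd (p : HermiteRep N) : (0 : ℝ) < p.d := mod_cast p.d_pos
  have hterm (p : HermiteRep N) : √(s p • p.gl • τ).im ≤ √(2 * N) / (q p).d * ‖v p‖⁻¹ := by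
    have := norm_pos_iff.mpr (hv p)
    rw [hsmul, div_mul_eq_mul_div, ← div_eq_mul_inv, div_div, mul_comm ‖v p‖,
      le_div_iff₀' (mul_pos (hd _) this), ← hnorm]
    exact norm_bottom_row_mul_sqrt_im_le hτ him _
  have hfiber (p' : HermiteRep N) : ∑ p with q p = p', ‖v p‖⁻¹ ≤ 8 * (2 * √N / p'.d) := by
    have hinjOn : Set.InjOn v ↑(Finset.univ.filter (q · = p')) := fun p hp r hr h ↦
      hinj (Prod.ext (by simp_all) h)
    rw [← Finset.sum_image (f := fun w ↦ ‖w‖⁻¹) hinjOn]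
    refine sum_inv_norm_le (by positivity) (Finset.forall_mem_image.mpr fun p _ ↦ hv p)
      fun w hw ↦ ?_
    obtain ⟨p, hp, rfl⟩ := Finset.mem_image.mp hw
    rw [le_div_iff₀' (hd p'), ← (Finset.mem_filter.mp hp).2, ← hnorm]
    exact norm_bottom_row_le hτ him (hsmul p ▸ hs p)
  calc ∑ p, √(s p • p.gl • τ).im
    _ ≤ ∑ p, √(2 * N) / (q p).d * ‖v p‖⁻¹ := Finset.sum_le_sum fun p _ ↦ hterm p
    _ = ∑ p', √(2 * N) / p'.d * ∑ p with q p = p', ‖v p‖⁻¹ := by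
      rw [← Finset.sum_fiberwise _ q]
      refine Finset.sum_congr rfl fun p' _ ↦ ?_
      rw [Finset.mul_sum]
      exact Finset.sum_congr rfl fun p hp ↦ by rw [(Finset.mem_filter.mp hp).2]
    _ ≤ ∑ p', 16 * √2 * (p'.a / p'.d) := Finset.sum_le_sum fun p' _ ↦ by
      refine (mul_le_mul_of_nonneg_left (hfiber p') (by positivity)).trans_eq ?_
      have hN : √(N : ℝ) * √N = p'.a * p'.d := by
        rw [Real.mul_self_sqrt (by positivity)]
        exact_mod_cast p'.a_mul_d.symm
      have := (hd p').ne'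
      rw [Real.sqrt_mul zero_le_two]
      field_simp
      linear_combination 16 * hN
    _ = 16 * √2 * dedekindPsi N := by rw [← Finset.mul_sum, sum_a_div_d]

lemma sum_log_im_le [NeZero N] {τ : ℍ} (hτ : τ ∈ 𝒟) (him : τ.im ≤ 1)
    {s : HermiteRep N → SL(2, ℤ)} (hs : ∀ p, s p • p.gl • τ ∈ 𝒟) :
    ∑ p, Real.log (s p • p.gl • τ).im ≤ 6.94 * dedekindPsi N := by
  have hlog : Real.log 32 ≤ 3.466 := by
    rw [show (32 : ℝ) = 2 ^ 5 by norm_num, Real.log_pow]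
    norm_num
    linarith [Real.log_two_lt_d9]
  have hbound (z : ℍ) : Real.log z.im ≤ √z.im / 16 + 4.932 := by
    have hpos := Real.sqrt_pos.mpr z.im_pos
    have hle := Real.log_le_sub_one_of_pos (show 0 < √z.im / 32 by positivity)
    rw [Real.log_div hpos.ne' (by norm_num), Real.log_sqrt z.im_pos.le] at hle
    linarith
  have htwo : √2 ≤ 1.5 := by
    rw [Real.sqrt_le_left (by norm_num)]
    norm_num
  have hcard : (Finset.univ : Finset (HermiteRep N)).card = dedekindPsi N := card_hermiteRep N
  calc ∑ p, Real.log (s p • p.gl • τ).im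
    _ ≤ ∑ p, (√(s p • p.gl • τ).im / 16 + 4.932) := Finset.sum_le_sum fun p _ ↦ hbound _
    _ = (∑ p, √(s p • p.gl • τ).im) / 16 + 4.932 * dedekindPsi N := by
      rw [Finset.sum_add_distrib, ← Finset.sum_div, Finset.sum_const, nsmul_eq_mul, hcard, mul_comm]
    _ ≤ 16 * √2 * dedekindPsi N / 16 + 4.932 * dedekindPsi N := by
      gcongr
      exact sum_sqrt_im_le hτ him hs
    _ ≤ 6.94 * dedekindPsi N := by
      nlinarith [(dedekindPsi N).cast_nonneg (α := ℝ)]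

end ModularPolynomial

/-! ### The upper bound -/

namespace ModularPolynomial

open UpperHalfPlane MatrixGroups Polynomial
open scoped Real ModularForm Modular

lemma norm_nome_le_of_mem_fd {τ : ℍ} (h : τ ∈ 𝒟) : ‖nome τ‖ ≤ 0.00434 :=
  (norm_nome_le_norm_nome_ρ h).trans norm_nome_ρ_le

lemma abs_log_norm_discriminant_sub_le_of_mem_fd {τ : ℍ} (h : τ ∈ 𝒟) :
    |Real.log ‖ModularForm.discriminant τ‖ + 2 * π * τ.im| ≤ 0.16 := by
  have hnome := norm_nome_le_of_mem_fd h
  have hdisc := abs_le.mp (abs_log_petDisc_sub_le (τ := τ) (by linarith))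
  have hone := abs_le.mp (abs_log_norm_one_sub_le (w := nome τ) (by linarith))
  have hsq : ‖nome τ‖ ^ 2 ≤ 0.00434 ^ 2 := by gcongr
  norm_num at hsq
  rw [log_petDisc] at hdisc
  exact abs_le.mpr ⟨by linarith, by linarith⟩

lemma norm_discriminant_le_of_mem_fd {τ : ℍ} (h : τ ∈ 𝒟) :
    ‖ModularForm.discriminant τ‖ ≤ 1.2 * ‖nome τ‖ := by
  have hlog := (abs_le.mp (abs_log_norm_discriminant_sub_le_of_mem_fd h)).2
  have hexp : Real.exp 0.16 ≤ 1.2 :=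
    (Real.exp_bound_div_one_sub_of_interval (by norm_num) (by norm_num)).trans (by norm_num)
  calc ‖ModularForm.discriminant τ‖
    _ ≤ Real.exp (0.16 + -2 * π * τ.im) :=
      (Real.log_le_iff_le_exp (norm_discriminant_pos τ)).mp (by linarith)
    _ ≤ 1.2 * ‖nome τ‖ := by
      rw [Real.exp_add, norm_nome]
      gcongr

lemma abs_norm_E₄_sub_one_le_of_mem_fd {τ : ℍ} (h : τ ∈ 𝒟) :
    |‖ModularForm.E₄ τ‖ - 1| ≤ 240 * ‖nome τ‖ + 0.0415 := by
  calc |‖ModularForm.E₄ τ‖ - 1|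
    _ ≤ ‖ModularForm.E₄ τ - 1‖ := by simpa using abs_norm_sub_norm_le (ModularForm.E₄ τ) 1
    _ = ‖240 * nome τ + (ModularForm.E₄ τ - (1 + 240 * nome τ))‖ := by ring_nf
    _ ≤ ‖240 * nome τ‖ + ‖ModularForm.E₄ τ - (1 + 240 * nome τ)‖ := norm_add_le _ _
    _ ≤ 240 * ‖nome τ‖ + 0.0415 := by
      rw [norm_mul, Complex.norm_ofNat]
      gcongr
      exact norm_E₄_sub_le_of_mem_fd h

lemma log_petMax_le_of_mem_fd {τ : ℍ} (h : τ ∈ 𝒟) :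
    Real.log (petMax τ) ≤ 2.34 + 6 * Real.log τ.im := by
  have hnome := norm_nome_le_of_mem_fd h
  have hE₄ : ‖ModularForm.E₄ τ‖ ≤ 2.1 := by
    linarith [(abs_le.mp (abs_norm_E₄_sub_one_le_of_mem_fd h)).2]
  have hmax : max (‖ModularForm.E₄ τ‖ ^ 3) ‖ModularForm.discriminant τ‖ ≤ 10 :=
    max_le ((pow_le_pow_left₀ (norm_nonneg _) hE₄ 3).trans (by norm_num))
      (by linarith [norm_discriminant_le_of_mem_fd h])
  have hlog_ten : Real.log 10 ≤ 2.34 := by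
    have hten : Real.log 10 = 3 * Real.log 2 + Real.log (5 / 4) := by
      rw [show (10 : ℝ) = 2 ^ 3 * (5 / 4) by norm_num, Real.log_mul (by norm_num) (by norm_num),
        Real.log_pow]
      norm_num
    linarith [Real.log_two_lt_d9, Real.log_le_sub_one_of_pos (show (0 : ℝ) < 5 / 4 by norm_num)]
  have hpos := pow_pos τ.im_pos 6
  calc Real.log (petMax τ)
    _ ≤ Real.log (10 * τ.im ^ 6) :=
      Real.log_le_log (petMax_pos τ) (mul_le_mul_of_nonneg_right hmax hpos.le)
    _ = Real.log 10 + 6 * Real.log τ.im := by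
      rw [Real.log_mul (by norm_num) hpos.ne', Real.log_pow]
      rfl
    _ ≤ 2.34 + 6 * Real.log τ.im := by gcongr

lemma im_le_one_of_norm_kleinJ_le_one {τ : ℍ} (h : τ ∈ 𝒟) (hj : ‖kleinJ τ‖ ≤ 1) :
    τ.im ≤ 1 := by
  by_contra! him
  have hnome : ‖nome τ‖ ≤ 0.0026 :=
    calc ‖nome τ‖ = Real.exp (-2 * π * τ.im) := norm_nome τ
      _ ≤ Real.exp (-1 * (6 : ℕ)) := by
        rw [Real.exp_le_exp]
        push_cast
        nlinarith [Real.pi_gt_three]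
      _ = Real.exp (-1) ^ 6 := by rw [mul_comm, Real.exp_nat_mul]
      _ ≤ 0.368 ^ 6 := by
        gcongr
        linarith [Real.exp_neg_one_lt_d9]
      _ ≤ 0.0026 := by norm_num
  have hE₄ : 0.33 ≤ ‖ModularForm.E₄ τ‖ := by
    linarith [(abs_le.mp (abs_norm_E₄_sub_one_le_of_mem_fd h)).1]
  have hcube := pow_le_pow_left₀ (by norm_num) hE₄ 3
  rw [kleinJ, norm_div, norm_pow, div_le_one (norm_discriminant_pos τ)] at hj
  norm_num at hcube
  linarith [norm_discriminant_le_of_mem_fd h]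

lemma le_log_petDisc_of_mem_fd {τ : ℍ} (h : τ ∈ 𝒟) (him : τ.im ≤ 1) :
    -7.4 ≤ Real.log (petDisc τ) := by
  have hdisc := (abs_le.mp (abs_log_norm_discriminant_sub_le_of_mem_fd h)).1
  have hlog : -0.155 ≤ Real.log τ.im := by
    have hsqrt : 1.732 ≤ √3 := Real.le_sqrt_of_sq_le (by norm_num)
    have hinv : τ.im⁻¹ ≤ (0.866 : ℝ)⁻¹ :=
      inv_anti₀ (by norm_num) (by linarith [sqrt_three_div_two_le_im h])
    norm_num at hinv
    linarith [Real.one_sub_inv_le_log_of_pos τ.im_pos]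
  have hpi : 2 * π * τ.im ≤ 6.2832 := by nlinarith [τ.im_pos, Real.pi_lt_d6, Real.pi_pos]
  rw [log_petDisc]
  linarith

lemma _root_.IsModularPolynomial.log_mahlerMeasure_evalY_le {N : ℕ} [NeZero N]
    {P : MvPolynomial (Fin 2) ℤ} (hP : IsModularPolynomial N P) {y : ℂ} (hy : ‖y‖ ≤ 1) :
    Real.log (evalY P y).mahlerMeasure ≤
      6 * dedekindPsi N * (Real.log N - 2 * lambdaN N) + 51.5 * dedekindPsi N := by
  obtain ⟨τ₀, rfl⟩ := hP.exists_kleinJ_eq y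
  obtain ⟨σ, hσ⟩ := ModularGroup.exists_smul_mem_fd τ₀
  rw [← kleinJ_smul σ] at hy ⊢
  set τ := σ • τ₀
  have him := im_le_one_of_norm_kleinJ_le_one hσ hy
  choose s hs using fun p : HermiteRep N ↦ ModularGroup.exists_smul_mem_fd (p.gl • τ)
  have hpetMax : ∑ p : HermiteRep N, Real.log (petMax (p.gl • τ)) ≤
      2.34 * dedekindPsi N + 6 * (6.94 * dedekindPsi N) :=
    calc ∑ p : HermiteRep N, Real.log (petMax (p.gl • τ))
      _ ≤ ∑ p, (2.34 + 6 * Real.log (s p • p.gl • τ).im) := Finset.sum_le_sum fun p _ ↦ by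
        rw [← petMax_smul (s p)]
        exact log_petMax_le_of_mem_fd (hs p)
      _ = 2.34 * dedekindPsi N + 6 * ∑ p, Real.log (s p • p.gl • τ).im := by
        rw [Finset.sum_add_distrib, Finset.sum_const, nsmul_eq_mul, ← Finset.mul_sum,
          Finset.card_univ, card_hermiteRep, mul_comm]
      _ ≤ _ := by
        gcongr
        exact sum_log_im_le hσ him hs
  have hpetDisc := mul_le_mul_of_nonneg_left (le_log_petDisc_of_mem_fd hσ him)
    (dedekindPsi N).cast_nonneg
  rw [hP.log_mahlerMeasure_evalY]
  linarith [(dedekindPsi N).cast_nonneg (α := ℝ)]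

lemma _root_.IsModularPolynomial.norm_coeff_evalY_le {N : ℕ} [NeZero N]
    {P : MvPolynomial (Fin 2) ℤ} (hP : IsModularPolynomial N P) {y : ℂ} (hy : ‖y‖ ≤ 1) (i : ℕ) :
    ‖(evalY P y).coeff i‖ ≤
      Real.exp (6 * dedekindPsi N * (Real.log N - 2 * lambdaN N + 9.5387)) := by
  have hpos : 0 < (evalY P y).mahlerMeasure :=
    mahlerMeasure_pos_of_ne_zero (hP.monic_evalY y).ne_zero
  have hchoose : ((evalY P y).natDegree.choose i : ℝ) ≤ Real.exp (dedekindPsi N * Real.log 2) := by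
    rw [hP.natDegree_evalY, hP.natDegree_toBivariate_eq, Real.exp_nat_mul, Real.exp_log two_pos]
    exact_mod_cast Nat.choose_le_two_pow _ _
  calc ‖(evalY P y).coeff i‖
    _ ≤ (evalY P y).natDegree.choose i * (evalY P y).mahlerMeasure :=
      norm_coeff_le_choose_mul_mahlerMeasure i _
    _ ≤ Real.exp (dedekindPsi N * Real.log 2) *
        Real.exp (6 * dedekindPsi N * (Real.log N - 2 * lambdaN N) + 51.5 * dedekindPsi N) := by
      gcongr
      exact (Real.log_le_iff_le_exp hpos).mp (hP.log_mahlerMeasure_evalY_le hy)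
    _ ≤ _ := by
      rw [← Real.exp_add, Real.exp_le_exp]
      nlinarith [Real.log_two_lt_d9, (dedekindPsi N).cast_nonneg (α := ℝ)]

lemma norm_coeff_le_of_norm_eval_le {p : ℂ[X]} {B : ℝ} (h : ∀ y : ℂ, ‖y‖ = 1 → ‖p.eval y‖ ≤ B)
    (k : ℕ) : ‖p.coeff k‖ ≤ B := by
  by_cases hk : k ∈ p.support
  · refine le_of_sq_le_sq ?_ ((norm_nonneg _).trans (h 1 norm_one))
    calc ‖p.coeff k‖ ^ 2
      _ ≤ ∑ i ∈ p.support, ‖p.coeff i‖ ^ 2 :=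
        Finset.single_le_sum (f := fun i ↦ ‖p.coeff i‖ ^ 2) (fun _ _ ↦ by positivity) hk
      _ = Real.circleAverage (fun y ↦ ‖p.eval y‖ ^ 2) 0 1 :=
        sum_sq_norm_coeff_eq_circleAverage p
      _ ≤ B ^ 2 := Real.circleAverage_mono_on_of_le_circle
        (ContinuousOn.circleIntegrable' (by fun_prop)) fun y hy ↦
          pow_le_pow_left₀ (norm_nonneg _) (h y (by simpa using hy)) 2
  · rw [notMem_support_iff.mp hk, norm_zero]
    exact (norm_nonneg _).trans (h 1 norm_one)

lemma norm_coeff_le_of_norm_coeff_evalY_le {P : MvPolynomial (Fin 2) ℤ} {B : ℝ}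
    (h : ∀ (y : ℂ) (i : ℕ), ‖y‖ = 1 → ‖(evalY P y).coeff i‖ ≤ B) (m : Fin 2 →₀ ℕ) :
    ‖P.coeff m‖ ≤ B := by
  have hbound := norm_coeff_le_of_norm_eval_le (B := B)
    (p := ((toBivariate P).coeff (m 0)).map (Int.castRingHom ℂ))
    (fun y hy ↦ by simpa [evalY, eval_map, aeval_def] using h y (m 0) hy) (m 1)
  rwa [coeff_map, coeff_coeff_toBivariate, eq_intCast, Complex.norm_intCast] at hbound

lemma _root_.IsModularPolynomial.polyHeight_le {N : ℕ} [NeZero N] {P : MvPolynomial (Fin 2) ℤ}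
    (hP : IsModularPolynomial N P) :
    polyHeight P ≤ 6 * dedekindPsi N * (Real.log N - 2 * lambdaN N + 9.5387) := by
  have hlog := Real.log_natCast_nonneg N
  have : 0 ≤ Real.log N - 2 * lambdaN N := by linarith [lambdaN_le N]
  exact polyHeight_le_of_norm_coeff_le (by positivity)
    (norm_coeff_le_of_norm_coeff_evalY_le fun _ i hy ↦ hP.norm_coeff_evalY_le hy.le i)

end ModularPolynomial

/-- Degrees and explicit height bounds for the modular polynomial `Φ_N`, `N ≥ 2`. -/
theorem modularPolynomial_degree_and_height (N : ℕ) (hN : 2 ≤ N)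
    (P : MvPolynomial (Fin 2) ℤ) (hP : IsModularPolynomial N P) :
    MvPolynomial.degreeOf 0 P = dedekindPsi N ∧
    MvPolynomial.degreeOf 1 P = dedekindPsi N ∧
    6 * (dedekindPsi N : ℝ) * (Real.log N - 2 * lambdaN N - 0.0351) ≤ polyHeight P ∧
    polyHeight P ≤ 6 * (dedekindPsi N : ℝ) * (Real.log N - 2 * lambdaN N + 9.5387) := by
  have : NeZero N := ⟨by lia⟩
  exact ⟨hP.degreeOf_zero, hP.degreeOf_one, hP.le_polyHeight hN, hP.polyHeight_le⟩
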